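/- arXiv:1909.02748 — 4 statements merged into one kernel-verified Lean document; each statement's English description precedes it below -/
import Mathlib

section
/- Let R₁, R₂, R₃ be m₁×n₁ complex matrices and S₁, S₂, S₃ be m₂×n₂ complex matrices such that R₁, R₂, R₃ are linearly independent and S₁, S₂, S₃ are linearly independent. Then rank(∑_{i=1}^{3} R_i ⊗ S_i) ≤ 3 · rank(∑_{i=1}^{3} R_i ⊗ S_iᵀ), where ⊗ denotes the Kronecker product. -/
open Matrix Kronecker

/-!
Transposing the second factors has, up to a transposition of the whole matrix, the same effect as
transposing the first ones. So view `M = ∑ i, R i ⊗ S i` as the composite of the bilinear maps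
`R : P × Q → E` and `T : E × B → A` with `E = 𝕜 ^ K`, and compare the rank of `M` with the rank of
the matrix `M'` obtained by exchanging the roles of `P` and `Q`. Ranks do not change under field
extensions, so `𝕜` may be taken infinite.

Let `t U` be the dimension of the span of `T (U, B)`; it is monotone and submodular in the subspace
`U` of `E`. Choose `x : P` with `R x ≠ 0` and `t (range (R x))` maximal, equal to `τ` say, and
restrict `R` to `P × ker (R x)`. This lowers the rank of `M` by at least `τ`, and the rank of `M'`
by at most the sum of the `t (R (P, y j))`, for any `y j` that span `Q` modulo `ker (R x)`. It
remains to choose the `y j` such that this sum is at most `K * τ`, and to induct on `dim Q`.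

Let `V` be the span of `R (P, Q)`. Any basis of `Q` modulo `ker (R x)` will do if `range (R x)` is a
line, because `t V ≤ K * τ`, and also if it is all of `E`, because then `t V ≤ τ`. For `K ≤ 3` this
leaves the case where `K = 3` and `range (R x)` is a plane. Then either some `y j` can be chosen
with `R (P, y j)` inside the plane, or submodularity applied to the plane and two further ranges
`range (R z)` gives `2 * t E ≤ 3 * τ`.
-/

section RankComparison

open Module Submodule LinearMap

variable {𝕜 E : Type*} [Field 𝕜] [AddCommGroup E] [Module 𝕜 E]

/-- A `q`-polymatroid rank function: a monotone submodular function on the subspaces of a vector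
space, vanishing at the zero subspace. It abstracts the properties of
`U ↦ dim (span (T (U, B)))` for a bilinear map `T` on `E × B`. -/
structure IsQPolymatroid (t : Submodule 𝕜 E → ℕ) : Prop where
  map_bot : t ⊥ = 0
  mono : Monotone t
  submodular (U V : Submodule 𝕜 E) : t (U ⊔ V) + t (U ⊓ V) ≤ t U + t V

namespace IsQPolymatroid

variable {t : Submodule 𝕜 E → ℕ} (ht : IsQPolymatroid t)

include ht

theorem sup_le_add (U V : Submodule 𝕜 E) : t (U ⊔ V) ≤ t U + t V :=
  (Nat.le_add_right _ _).trans (ht.submodular U V)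

theorem iSup_le_sum {ι : Type*} [Fintype ι] (U : ι → Submodule 𝕜 E) :
    t (⨆ i, U i) ≤ ∑ i, t (U i) := by
  rw [← Finset.sup_univ_eq_iSup]
  exact Finset.apply_sup_le_sum ht.map_bot (ht.sup_le_add _ _) _

theorem iSup_le_finrank_mul [FiniteDimensional 𝕜 E] {ι : Type*} {U : ι → Submodule 𝕜 E} {τ : ℕ}
    (hU : ∀ i, t (U i) ≤ τ) : t (⨆ i, U i) ≤ finrank 𝕜 E * τ := by
  obtain ⟨e, he, hspan, -⟩ := exists_fun_fin_finrank_span_eq 𝕜 (⋃ i, (U i : Set E))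
  choose k hk using fun j => Set.mem_iUnion.1 (he j)
  have hcover : ⨆ i, U i ≤ ⨆ j, U (k j) := by
    rw [iSup_eq_span]
    refine hspan.ge.trans (span_le.2 ?_)
    rintro _ ⟨j, rfl⟩
    exact mem_iSup_of_mem j (hk j)
  calc t (⨆ i, U i) ≤ ∑ j, t (U (k j)) := (ht.mono hcover).trans (ht.iSup_le_sum _)
    _ ≤ finrank 𝕜 (span 𝕜 (⋃ i, (U i : Set E))) * τ := by
      simpa using Finset.sum_le_sum fun j (_ : j ∈ Finset.univ) => hU (k j)
    _ ≤ finrank 𝕜 E * τ := Nat.mul_le_mul_right τ (finrank_le _)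

theorem iSup_le_two_mul_of_isCoatom {ι : Type*} {U : ι → Submodule 𝕜 E} {i : ι}
    (hi : IsCoatom (U i)) (hmax : ∀ j, t (U j) ≤ t (U i)) : t (⨆ j, U j) ≤ 2 * t (U i) := by
  by_cases h : ∀ j, U j ≤ U i
  · exact (ht.mono (iSup_le h)).trans (Nat.le_mul_of_pos_left _ two_pos)
  · push Not at h
    obtain ⟨j, hj⟩ := h
    have htop : U i ⊔ U j = ⊤ := (hi.not_le_iff_codisjoint.1 hj).eq_top
    calc t (⨆ j, U j) ≤ t (U i ⊔ U j) := ht.mono (htop ▸ le_top)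
      _ ≤ t (U i) + t (U j) := ht.sup_le_add _ _
      _ ≤ 2 * t (U i) := by have := hmax j; omega

theorem two_mul_top_le {U V W : Submodule 𝕜 E} {τ : ℕ} (hU : t U ≤ τ) (hV : t V ≤ τ)
    (hW : t W ≤ τ) (hUV : U ⊔ V = ⊤) (hUVW : U ⊓ V ⊔ W = ⊤) : 2 * t ⊤ ≤ 3 * τ := by
  have h₁ := ht.submodular U V
  have h₂ := ht.sup_le_add (U ⊓ V) W
  rw [hUV] at h₁
  rw [hUVW] at h₂
  omega

end IsQPolymatroid

theorem exists_ne_zero_add_smul_notMem [Infinite 𝕜] {S : Submodule 𝕜 E} {u : E} (hu : u ∉ S)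
    (b : E) : ∃ c : 𝕜, c ≠ 0 ∧ u + c • b ∉ S := by
  classical
  by_contra! h
  obtain ⟨c, hc⟩ := Infinite.exists_notMem_finset ({0, 1} : Finset 𝕜)
  simp only [Finset.mem_insert, Finset.mem_singleton, not_or] at hc
  have hmem : (c - 1) • b ∈ S := by
    have := S.sub_mem (h c hc.1) (h 1 one_ne_zero)
    rwa [add_sub_add_left_eq_sub, ← sub_smul] at this
  have hb : b ∈ S := (S.smul_mem_iff (sub_ne_zero.2 hc.2)).1 hmem
  exact hu ((S.add_mem_iff_left hb).1 (by simpa using h 1 one_ne_zero))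

theorem notMem_span_singleton_comm {u v : E} (hu : u ≠ 0) (h : v ∉ span 𝕜 {u}) :
    u ∉ span 𝕜 {v} := by
  intro huv
  obtain ⟨a, rfl⟩ := mem_span_singleton.1 huv
  have ha : a ≠ 0 := by rintro rfl; simp at hu
  exact h (mem_span_singleton.2 ⟨a⁻¹, inv_smul_smul₀ ha v⟩)

theorem le_of_pair_mem_of_finrank_le_two {U W : Submodule 𝕜 E} [FiniteDimensional 𝕜 U]
    (hU : finrank 𝕜 U ≤ 2) {v w : E} (hvU : v ∈ U) (hwU : w ∈ U) (hvW : v ∈ W) (hwW : w ∈ W)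
    (hv : v ≠ 0) (hw : w ∉ span 𝕜 {v}) : U ≤ W := by
  have hli : LinearIndependent 𝕜 ![v, w] :=
    (LinearIndependent.pair_iff' hv).2 fun a ha => hw (mem_span_singleton.2 ⟨a, ha⟩)
  have hspan : span 𝕜 (Set.range ![v, w]) = U := by
    refine eq_of_le_of_finrank_le ?_ ?_
    · rw [span_le, Set.range_subset_iff, Fin.forall_fin_two]
      exact ⟨hvU, hwU⟩
    · simpa [finrank_span_eq_card hli] using hU
  rw [← hspan, span_le, Set.range_subset_iff, Fin.forall_fin_two]
  exact ⟨hvW, hwW⟩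

theorem isCoatom_of_finrank_add_one_eq [FiniteDimensional 𝕜 E] {U : Submodule 𝕜 E}
    (hU : finrank 𝕜 U + 1 = finrank 𝕜 E) : IsCoatom U := by
  refine ⟨?_, fun W hUW => ?_⟩
  · rintro rfl
    simp at hU
  · have := finrank_lt_finrank_of_lt hUW
    exact eq_top_of_finrank_eq (le_antisymm (finrank_le W) (by omega))

section Columns

variable {P Q : Type*} [AddCommGroup P] [Module 𝕜 P] [AddCommGroup Q] [Module 𝕜 Q]

theorem exists_linearIndependent_codisjoint_ker {f : Q →ₗ[𝕜] E} [FiniteDimensional 𝕜 (range f)]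
    {d : ℕ} (hf : finrank 𝕜 (range f) = d) :
    ∃ y : Fin d → Q, LinearIndependent 𝕜 (f ∘ y) ∧
      Codisjoint (span 𝕜 (Set.range y)) (ker f) := by
  let b := finBasisOfFinrankEq 𝕜 (range f) hf
  choose y hy using fun j => (b j).2
  have hfy : f ∘ y = (range f).subtype ∘ b := funext hy
  refine ⟨y, ?_, ?_⟩
  · rw [hfy]
    exact b.linearIndependent.map' _ (ker_subtype _)
  · rw [← map_eq_range_iff, Submodule.map_span, ← Set.range_comp, hfy, Set.range_comp,
      ← Submodule.map_span, b.span_eq, Submodule.map_top, range_subtype]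

theorem range_flip_le_iSup_range (R : P →ₗ[𝕜] Q →ₗ[𝕜] E) (y : Q) :
    range (R.flip y) ≤ ⨆ x, range (R x) := by
  rintro _ ⟨x, rfl⟩
  exact mem_iSup_of_mem x ⟨y, rfl⟩

theorem exists_smul_of_ker_le_ker {φ ψ : P →ₗ[𝕜] 𝕜} (h : ker φ ≤ ker ψ) :
    ∃ a : 𝕜, ψ = a • φ := by
  have hmem : ψ ∈ span 𝕜 (Set.range fun _ : Unit => φ) :=
    mem_span_of_iInf_ker_le_ker (by simpa using h)
  obtain ⟨a, rfl⟩ := mem_span_singleton.1 (by simpa using hmem)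
  exact ⟨a, rfl⟩

theorem exists_range_flip_sub_smul_le {R : P →ₗ[𝕜] Q →ₗ[𝕜] E} {U : Submodule 𝕜 E}
    (hU : IsCoatom U) {y₁ y₂ : Q} (h : ∀ w, R w y₁ ∈ U → R w y₂ ∈ U) :
    ∃ a : 𝕜, range (R.flip (y₂ - a • y₁)) ≤ U := by
  obtain ⟨g, hg, hUg⟩ := exists_le_ker_of_lt_top U hU.lt_top
  have hker : ker g = U := (hU.le_iff_eq (mt ker_eq_top.1 hg)).1 hUg
  subst hker
  obtain ⟨a, ha⟩ := exists_smul_of_ker_le_ker (φ := g ∘ₗ R.flip y₁) (ψ := g ∘ₗ R.flip y₂) h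
  refine ⟨a, ?_⟩
  rintro _ ⟨w, rfl⟩
  have hw : g (R w y₂) = a * g (R w y₁) := LinearMap.congr_fun ha w
  simp [hw]

theorem exists_sup_range_eq_top [Infinite 𝕜] {R : P →ₗ[𝕜] Q →ₗ[𝕜] E} {x : P}
    [FiniteDimensional 𝕜 (range (R x))]
    (hx : IsCoatom (range (R x))) (hx₂ : finrank 𝕜 (range (R x)) ≤ 2) {y₁ y₂ : Q}
    (hy : LinearIndependent 𝕜 ![R x y₁, R x y₂]) {w₁ w₂ : P}
    (h₁₁ : R w₁ y₁ ∉ range (R x)) (h₁₂ : R w₁ y₂ ∈ range (R x))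
    (h₂₁ : R w₂ y₁ ∈ range (R x)) (h₂₂ : R w₂ y₂ ∉ range (R x)) :
    ∃ z₁ z₂, range (R x) ⊔ range (R z₁) = ⊤ ∧ range (R x) ⊓ range (R z₁) ⊔ range (R z₂) = ⊤ := by
  have hy₁ : R x y₁ ≠ 0 := hy.ne_zero 0
  have hy₂ : R x y₂ ∉ span 𝕜 {R x y₁} := fun h =>
    let ⟨a, ha⟩ := mem_span_singleton.1 h
    (LinearIndependent.pair_iff' hy₁).1 hy a ha
  obtain ⟨c, hc, hv⟩ := exists_ne_zero_add_smul_notMem hy₂ (R w₁ y₂)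
  obtain ⟨d, hd, hv'⟩ :=
    exists_ne_zero_add_smul_notMem (notMem_span_singleton_comm hy₁ hv) (R w₂ y₁)
  have hR (w : P) (c : 𝕜) (y : Q) : R (x + c • w) y = R x y + c • R w y := by simp
  have hout {w : P} {c : 𝕜} {y : Q} (hc : c ≠ 0) (h : R w y ∉ range (R x)) :
      R (x + c • w) y ∉ range (R x) := by
    rwa [hR, Submodule.add_mem_iff_right _ (mem_range_self (R x) y), smul_mem_iff _ hc]
  have hin {w : P} {c : 𝕜} {y : Q} (h : R w y ∈ range (R x)) : R (x + c • w) y ∈ range (R x) := by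
    rw [hR]
    exact add_mem (mem_range_self (R x) y) (smul_mem _ c h)
  simp only [← hR] at hv hv'
  set z₁ := x + c • w₁
  set z₂ := x + d • w₂
  set W := range (R x) ⊓ range (R z₁) ⊔ range (R z₂)
  have hz₁ : ¬ range (R z₁) ≤ range (R x) := fun h => hout hc h₁₁ (h (mem_range_self _ y₁))
  have hW : ¬ W ≤ range (R x) := fun h =>
    hout hd h₂₂ (h (mem_sup_right (mem_range_self _ y₂)))
  -- `R z₁ y₂` and `R z₂ y₁` are independent vectors of the plane `range (R x)`, hence span it.
  have hplane : range (R x) ≤ W :=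
    le_of_pair_mem_of_finrank_le_two hx₂ (hin h₁₂) (hin h₂₁)
      (mem_sup_left ⟨hin h₁₂, mem_range_self _ y₂⟩) (mem_sup_right (mem_range_self _ y₁))
      (fun h => hv (h ▸ zero_mem _)) hv'
  exact ⟨z₁, z₂, (hx.not_le_iff_codisjoint.1 hz₁).eq_top, hx.2 _ (lt_of_le_not_ge hplane hW)⟩

end Columns

namespace IsQPolymatroid

variable {P Q : Type*} [AddCommGroup P] [Module 𝕜 P] [AddCommGroup Q] [Module 𝕜 Q]
  {t : Submodule 𝕜 E → ℕ} (ht : IsQPolymatroid t) {R : P →ₗ[𝕜] Q →ₗ[𝕜] E}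

include ht

theorem exists_ne_zero_forall_range_le (hR : R ≠ 0) :
    ∃ x, R x ≠ 0 ∧ ∀ z, t (range (R z)) ≤ t (range (R x)) := by
  have hfin : ((fun z => t (range (R z))) '' {z | R z ≠ 0}).Finite :=
    (Set.finite_Iic (t ⊤)).subset (Set.image_subset_iff.2 fun z _ => ht.mono le_top)
  obtain ⟨x, hx⟩ := Set.Finite.exists_maximalFor' _ _ hfin (DFunLike.ne_iff.1 hR)
  refine ⟨x, hx.prop, fun z => ?_⟩
  by_cases hz : R z = 0
  · simp [hz, ht.map_bot]
  · exact (le_total _ _).elim id (hx.le_of_le hz)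

variable {x : P} (hmax : ∀ z, t (range (R z)) ≤ t (range (R x)))

include hmax

theorem sum_range_flip_le_three_mul (hx : IsCoatom (range (R x))) {y₁ y₂ : Q}
    (hy : range (R.flip y₂) ≤ range (R x)) :
    t (range (R.flip y₁)) + t (range (R.flip y₂)) ≤ 3 * t (range (R x)) := by
  have h₁ := ht.mono (range_flip_le_iSup_range R y₁)
  have h₂ := ht.mono hy
  have h₃ := ht.iSup_le_two_mul_of_isCoatom (U := fun z => range (R z)) hx hmax
  omega

theorem exists_pair_sum_range_flip_le (hx : IsCoatom (range (R x))) {y₁ y₂ : Q}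
    (hy : Codisjoint (span 𝕜 {y₁, y₂}) (ker (R x)))
    (h : ∀ w, R w y₁ ∈ range (R x) → R w y₂ ∈ range (R x)) :
    ∃ y : Fin 2 → Q, Codisjoint (span 𝕜 (Set.range y)) (ker (R x)) ∧
      ∑ j, t (range (R.flip (y j))) ≤ 3 * t (range (R x)) := by
  obtain ⟨a, ha⟩ := exists_range_flip_sub_smul_le hx h
  refine ⟨![y₁, y₂ - a • y₁], hy.mono_left ?_, ?_⟩
  · rw [Matrix.range_cons_cons_empty, span_le, Set.pair_subset_iff]
    exact ⟨mem_span_of_mem (by simp), mem_span_pair.2 ⟨a, 1, by simp⟩⟩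
  · simpa using ht.sum_range_flip_le_three_mul hmax hx ha

theorem exists_sum_range_flip_le_of_isCoatom [Infinite 𝕜] [FiniteDimensional 𝕜 (range (R x))]
    (hx : IsCoatom (range (R x))) (hx₂ : finrank 𝕜 (range (R x)) ≤ 2) {y : Fin 2 → Q}
    (hy : LinearIndependent 𝕜 (R x ∘ y)) (hspan : Codisjoint (span 𝕜 (Set.range y)) (ker (R x))) :
    ∃ y : Fin 2 → Q, Codisjoint (span 𝕜 (Set.range y)) (ker (R x)) ∧
      ∑ j, t (range (R.flip (y j))) ≤ 3 * t (range (R x)) := by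
  have hrange : Set.range y = {y 0, y 1} := by
    ext
    simp [Fin.exists_fin_two, eq_comm]
  have hpair : Codisjoint (span 𝕜 {y 0, y 1}) (ker (R x)) := hrange ▸ hspan
  by_cases h₁ : ∀ w, R w (y 0) ∈ range (R x) → R w (y 1) ∈ range (R x)
  · exact ht.exists_pair_sum_range_flip_le hmax hx hpair h₁
  by_cases h₂ : ∀ w, R w (y 1) ∈ range (R x) → R w (y 0) ∈ range (R x)
  · exact ht.exists_pair_sum_range_flip_le hmax hx (Set.pair_comm _ _ ▸ hpair) h₂
  push Not at h₁ h₂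
  obtain ⟨w₂, h₂₁, h₂₂⟩ := h₁
  obtain ⟨w₁, h₁₂, h₁₁⟩ := h₂
  have hy' : LinearIndependent 𝕜 ![R x (y 0), R x (y 1)] := by
    convert hy using 1
    exact funext (Fin.forall_fin_two.2 ⟨rfl, rfl⟩)
  obtain ⟨z₁, z₂, htop₁, htop₂⟩ := exists_sup_range_eq_top hx hx₂ hy' h₁₁ h₁₂ h₂₁ h₂₂
  have htop := ht.two_mul_top_le le_rfl (hmax z₁) (hmax z₂) htop₁ htop₂
  refine ⟨y, hspan, ?_⟩
  calc ∑ j, t (range (R.flip (y j))) ≤ ∑ _j : Fin 2, t ⊤ :=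
        Finset.sum_le_sum fun j _ => ht.mono le_top
    _ ≤ 3 * t (range (R x)) := by simpa using htop

theorem exists_sum_range_flip_le [Infinite 𝕜] [FiniteDimensional 𝕜 E] (hE : finrank 𝕜 E ≤ 3) :
    ∃ (d : ℕ) (y : Fin d → Q), Codisjoint (span 𝕜 (Set.range y)) (ker (R x)) ∧
      ∑ j, t (range (R.flip (y j))) ≤ finrank 𝕜 E * t (range (R x)) := by
  obtain ⟨d, hd⟩ : ∃ d, finrank 𝕜 (range (R x)) = d := ⟨_, rfl⟩
  obtain ⟨y, hy, hspan⟩ := exists_linearIndependent_codisjoint_ker hd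
  have hdE : d ≤ finrank 𝕜 E := hd ▸ finrank_le _
  by_cases hplane : d = 2 ∧ finrank 𝕜 E = 3
  · obtain ⟨rfl, hE₃⟩ := hplane
    have hx : IsCoatom (range (R x)) := isCoatom_of_finrank_add_one_eq (by omega)
    rw [hE₃]
    exact ⟨2, ht.exists_sum_range_flip_le_of_isCoatom hmax hx hd.le hy hspan⟩
  refine ⟨d, y, hspan, ?_⟩
  set V := ⨆ z, range (R z)
  calc ∑ j, t (range (R.flip (y j))) ≤ ∑ _j : Fin d, t V :=
        Finset.sum_le_sum fun j _ => ht.mono (range_flip_le_iSup_range R (y j))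
    _ = d * t V := by simp
    _ ≤ finrank 𝕜 E * t (range (R x)) := by
      rcases hdE.eq_or_lt with rfl | hlt
      · have htop : range (R x) = ⊤ := eq_top_of_finrank_eq hd
        exact Nat.mul_le_mul_left _ (ht.mono (htop ▸ le_top))
      · exact (mul_le_of_le_one_left (Nat.zero_le _) (by omega)).trans
          (ht.iSup_le_finrank_mul hmax)

end IsQPolymatroid

section Bilinear

variable {P Q B A : Type*} [AddCommGroup P] [Module 𝕜 P] [AddCommGroup Q] [Module 𝕜 Q]
  [AddCommGroup B] [Module 𝕜 B] [AddCommGroup A] [Module 𝕜 A]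
  (T : E →ₗ[𝕜] B →ₗ[𝕜] A) (R : P →ₗ[𝕜] Q →ₗ[𝕜] E)

/-- The dimension of the span of `T (U, B)`: the `q`-polymatroid rank function defined by `T`. It
measures the change in the rank of a tensor product when `P` or `Q` is restricted to a subspace. -/
noncomputable def imageRank (U : Submodule 𝕜 E) : ℕ :=
  finrank 𝕜 (map₂ T U ⊤)

theorem isQPolymatroid_imageRank [FiniteDimensional 𝕜 A] : IsQPolymatroid (imageRank T) where
  map_bot := by simp [imageRank]
  mono _ _ h := finrank_mono (map₂_le_map₂_left h)
  submodular U V := by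
    have hinf : map₂ T (U ⊓ V) ⊤ ≤ map₂ T U ⊤ ⊓ map₂ T V ⊤ :=
      le_inf (map₂_le_map₂_left inf_le_left) (map₂_le_map₂_left inf_le_right)
    calc imageRank T (U ⊔ V) + imageRank T (U ⊓ V)
        ≤ finrank 𝕜 (map₂ T U ⊤ ⊔ map₂ T V ⊤ : Submodule 𝕜 A) +
          finrank 𝕜 (map₂ T U ⊤ ⊓ map₂ T V ⊤ : Submodule 𝕜 A) :=
          add_le_add (map₂_sup_left T U V ⊤ ▸ le_rfl) (finrank_mono hinf)
      _ = imageRank T U + imageRank T V := finrank_sup_add_finrank_inf_eq _ _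

/-- The column of index `(y, β)` of the block matrix with blocks `T (R x y) β`, whose block rows
are indexed by `x : P`. For `R` and `T` given by the matrices `R i` and `S i`, this matrix is
`∑ i, R i ⊗ S i`. -/
def tensorColumn : Q →ₗ[𝕜] B →ₗ[𝕜] P →ₗ[𝕜] A :=
  (llcomp 𝕜 P E A).flip.compl₁₂ R.flip T.flip

theorem tensorColumn_apply (x : P) (y : Q) (β : B) : tensorColumn T R y β x = T (R x y) β :=
  rfl

/-- The column space of the block matrix with columns `tensorColumn T R y β`. Its dimension stands
for the rank of that matrix. -/
def columnSpace : Submodule 𝕜 (P →ₗ[𝕜] A) :=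
  map₂ (tensorColumn T R) ⊤ ⊤

variable {T R}

theorem mem_columnSpace (y : Q) (β : B) : tensorColumn T R y β ∈ columnSpace T R :=
  apply_mem_map₂ _ mem_top mem_top

theorem columnSpace_le {N : Submodule 𝕜 (P →ₗ[𝕜] A)} :
    columnSpace T R ≤ N ↔ ∀ y β, tensorColumn T R y β ∈ N := by
  simp [columnSpace, map₂_le]

theorem apply_mem_of_mem_columnSpace {c : P →ₗ[𝕜] A} (hc : c ∈ columnSpace T R) (x : P) :
    c x ∈ map₂ T (range (R x)) ⊤ := by
  have : columnSpace T R ≤ (map₂ T (range (R x)) ⊤).comap (applyₗ x) :=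
    columnSpace_le.2 fun y β => apply_mem_map₂ T (mem_range_self (R x) y) mem_top
  exact this hc

theorem comp_subtype_mem_of_mem_columnSpace {c : P →ₗ[𝕜] A} (hc : c ∈ columnSpace T R)
    (K : Submodule 𝕜 P) : c ∘ₗ K.subtype ∈ columnSpace T (R ∘ₗ K.subtype) := by
  have : columnSpace T R ≤ (columnSpace T (R ∘ₗ K.subtype)).comap (lcomp 𝕜 A K.subtype) :=
    columnSpace_le.2 fun y β => mem_columnSpace (R := R ∘ₗ K.subtype) y β
  exact this hc

variable [FiniteDimensional 𝕜 P] [FiniteDimensional 𝕜 A]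

theorem imageRank_add_finrank_columnSpace_le (x : P) :
    imageRank T (range (R x)) + finrank 𝕜 (columnSpace T (R.compl₂ (ker (R x)).subtype)) ≤
      finrank 𝕜 (columnSpace T R) := by
  let ev : columnSpace T R →ₗ[𝕜] A := applyₗ x ∘ₗ (columnSpace T R).subtype
  rw [← ev.finrank_range_add_finrank_ker]
  refine add_le_add (finrank_mono (map₂_le.2 ?_)) ?_
  · rintro _ ⟨y, rfl⟩ β -
    exact ⟨⟨_, mem_columnSpace y β⟩, rfl⟩
  · have hker : columnSpace T (R.compl₂ (ker (R x)).subtype) ≤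
        (ker ev).map (columnSpace T R).subtype := columnSpace_le.2 fun y β => by
        refine ⟨⟨_, mem_columnSpace (T := T) (R := R) y β⟩, ?_, rfl⟩
        have hy : R x y = 0 := y.2
        simp [ev, tensorColumn_apply, hy]
    exact (finrank_mono hker).trans (finrank_map_subtype_eq _ _).le

theorem finrank_columnSpace_le_add_sum {ι : Type*} [Fintype ι] {K : Submodule 𝕜 P} {x : ι → P}
    (hx : Codisjoint (span 𝕜 (Set.range x)) K) :
    finrank 𝕜 (columnSpace T R) ≤
      finrank 𝕜 (columnSpace T (R ∘ₗ K.subtype)) + ∑ j, imageRank T (range (R (x j))) := by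
  let res : columnSpace T R →ₗ[𝕜] columnSpace T (R ∘ₗ K.subtype) :=
    (lcomp 𝕜 A K.subtype).restrict fun _ hc => comp_subtype_mem_of_mem_columnSpace hc K
  let ev (j : ι) : columnSpace T R →ₗ[𝕜] map₂ T (range (R (x j))) ⊤ :=
    (applyₗ (x j)).restrict fun _ hc => apply_mem_of_mem_columnSpace hc (x j)
  have hinj : Function.Injective (res.prod (LinearMap.pi ev)) := by
    refine (injective_iff_map_eq_zero _).2 fun c hc => Subtype.ext (ker_eq_top.1 ?_)
    obtain ⟨hres, hev⟩ := Prod.ext_iff.1 hc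
    refine eq_top_iff.2 (hx.eq_top.ge.trans (sup_le (span_le.2 ?_) fun z hz => ?_))
    · rintro _ ⟨j, rfl⟩
      exact congrArg Subtype.val (congrFun hev j)
    · exact LinearMap.congr_fun (congrArg Subtype.val hres) (⟨z, hz⟩ : K)
  calc finrank 𝕜 (columnSpace T R) ≤ _ := finrank_le_finrank_of_injective hinj
    _ = _ := by rw [finrank_prod, finrank_pi_fintype]; rfl

theorem finrank_columnSpace_flip_le [Infinite 𝕜] [FiniteDimensional 𝕜 E] (hE : finrank 𝕜 E ≤ 3)
    [FiniteDimensional 𝕜 Q] (R : P →ₗ[𝕜] Q →ₗ[𝕜] E) :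
    finrank 𝕜 (columnSpace T R.flip) ≤ finrank 𝕜 E * finrank 𝕜 (columnSpace T R) := by
  induction hn : finrank 𝕜 Q using Nat.strong_induction_on generalizing Q with
  | _ n ih =>
  by_cases hR : R = 0
  · have : columnSpace T R.flip = ⊥ := by
      rw [eq_bot_iff, columnSpace_le]
      intro y β
      ext
      simp [tensorColumn_apply, hR]
    rw [this, finrank_bot]
    exact Nat.zero_le _
  have ht := isQPolymatroid_imageRank T
  obtain ⟨x, hx, hmax⟩ := ht.exists_ne_zero_forall_range_le hR
  obtain ⟨d, y, hspan, hsum⟩ := ht.exists_sum_range_flip_le hmax hE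
  have hker : finrank 𝕜 (ker (R x)) < n := hn ▸ finrank_lt (mt ker_eq_top.1 hx)
  calc finrank 𝕜 (columnSpace T R.flip)
      ≤ finrank 𝕜 (columnSpace T (R.compl₂ (ker (R x)).subtype).flip) +
        ∑ j, imageRank T (range (R.flip (y j))) := finrank_columnSpace_le_add_sum hspan
    _ ≤ finrank 𝕜 E * finrank 𝕜 (columnSpace T (R.compl₂ (ker (R x)).subtype)) +
        finrank 𝕜 E * imageRank T (range (R x)) := add_le_add (ih _ hker _ rfl) hsum
    _ = finrank 𝕜 E * (imageRank T (range (R x)) +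
        finrank 𝕜 (columnSpace T (R.compl₂ (ker (R x)).subtype))) := by ring
    _ ≤ finrank 𝕜 E * finrank 𝕜 (columnSpace T R) :=
        Nat.mul_le_mul_left _ (imageRank_add_finrank_columnSpace_le x)

end Bilinear

section Kronecker

variable {ι k l m n : Type*}

/-- The bilinear map on `𝕜 ^ m × 𝕜 ^ n` whose `i`-th coordinate has matrix `R i`. It encodes
the first factors of `∑ i, R i ⊗ S i`. -/
def bilinOfMatrices [Fintype m] [Fintype n] (R : ι → Matrix m n 𝕜) :
    (m → 𝕜) →ₗ[𝕜] (n → 𝕜) →ₗ[𝕜] ι → 𝕜 :=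
  LinearMap.mk₂ 𝕜 (fun x y i => x ⬝ᵥ R i *ᵥ y)
    (fun _ _ _ => funext fun _ => add_dotProduct _ _ _)
    (fun _ _ _ => funext fun _ => smul_dotProduct _ _ _)
    (fun _ _ _ => funext fun _ => by simp [mulVec_add])
    (fun _ _ _ => funext fun _ => by simp [mulVec_smul])

theorem flip_bilinOfMatrices [Fintype m] [Fintype n] (R : ι → Matrix m n 𝕜) :
    (bilinOfMatrices R).flip = bilinOfMatrices fun i => (R i)ᵀ := by
  refine LinearMap.ext₂ fun y x => funext fun i => ?_
  change x ⬝ᵥ R i *ᵥ y = y ⬝ᵥ (R i)ᵀ *ᵥ x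
  rw [mulVec_transpose, dotProduct_mulVec, dotProduct_comm]

variable [Fintype ι]

theorem map_sum_kronecker {L : Type*} [Semiring L] (φ : 𝕜 →+* L)
    (R : ι → Matrix m n 𝕜) (S : ι → Matrix k l 𝕜) :
    (∑ i, R i ⊗ₖ S i).map φ = ∑ i, (R i).map φ ⊗ₖ (S i).map φ := by
  ext
  simp [Matrix.sum_apply]

theorem transpose_sum_kronecker (R : ι → Matrix m n 𝕜) (S : ι → Matrix k l 𝕜) :
    (∑ i, R i ⊗ₖ S i)ᵀ = ∑ i, (R i)ᵀ ⊗ₖ (S i)ᵀ := by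
  simp only [transpose_sum, kroneckerMap_transpose]

variable [Fintype l]

/-- The linear family `e ↦ ∑ i, e i • S i` of matrices, acting on `𝕜 ^ l`. It encodes the second
factors of `∑ i, R i ⊗ S i`. -/
def pencil (S : ι → Matrix k l 𝕜) : (ι → 𝕜) →ₗ[𝕜] (l → 𝕜) →ₗ[𝕜] k → 𝕜 :=
  mulVecBilin 𝕜 𝕜 ∘ₗ Fintype.linearCombination 𝕜 S

theorem rank_sum_kronecker [Fintype m] [Fintype n] (R : ι → Matrix m n 𝕜) (S : ι → Matrix k l 𝕜) :
    (∑ i, R i ⊗ₖ S i).rank = finrank 𝕜 (columnSpace (pencil S) (bilinOfMatrices R)) := by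
  classical
  let Φ : ((m → 𝕜) →ₗ[𝕜] k → 𝕜) →ₗ[𝕜] m × k → 𝕜 :=
    { toFun := fun c => vec (toMatrix' c)
      map_add' := by simp
      map_smul' := by simp }
  have hΦ : Function.Injective Φ := vec_bijective.injective.comp toMatrix'.injective
  let column (p : n × l) : (m → 𝕜) →ₗ[𝕜] k → 𝕜 :=
    tensorColumn (pencil S) (bilinOfMatrices R) (Pi.basisFun 𝕜 n p.1) (Pi.basisFun 𝕜 l p.2)
  have hcol (p : n × l) : (∑ i, R i ⊗ₖ S i).col p = Φ (column p) := by
    ext ⟨i, j⟩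
    simp [Φ, column, tensorColumn_apply, bilinOfMatrices, pencil, toMatrix'_apply, Matrix.sum_apply,
      Fintype.linearCombination_apply]
  have hspan : columnSpace (pencil S) (bilinOfMatrices R) = span 𝕜 (Set.range column) := by
    rw [columnSpace, ← (Pi.basisFun 𝕜 n).span_eq, ← (Pi.basisFun 𝕜 l).span_eq, map₂_span_span,
      Set.image2_range]
  rw [rank_eq_finrank_span_cols, funext hcol, Set.range_comp' Φ, ← Submodule.map_span, ← hspan,
    (equivMapOfInjective Φ hΦ _).finrank_eq]

theorem rank_sum_kronecker_le_of_infinite [Infinite 𝕜] [Finite m] [Fintype n] [Fintype k]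
    (hι : Fintype.card ι ≤ 3) (R : ι → Matrix m n 𝕜) (S : ι → Matrix k l 𝕜) :
    (∑ i, R i ⊗ₖ S i).rank ≤ Fintype.card ι * (∑ i, R i ⊗ₖ (S i)ᵀ).rank := by
  have := Fintype.ofFinite m
  have h := finrank_columnSpace_flip_le (T := pencil fun i => (S i)ᵀ)
    (by simpa using hι) (bilinOfMatrices R)
  rwa [flip_bilinOfMatrices, ← rank_sum_kronecker, ← rank_sum_kronecker, ← transpose_sum_kronecker,
    rank_transpose, finrank_fintype_fun_eq_card] at h

end Kronecker

theorem rank_map_algebraMap {L m n : Type*} [Field L] [Algebra 𝕜 L] [Finite m] [Fintype n]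
    (A : Matrix m n 𝕜) : (A.map (algebraMap 𝕜 L)).rank = A.rank := by
  obtain ⟨c, -, hspan, hli⟩ := exists_fun_fin_finrank_span_eq 𝕜 (Set.range A.col)
  have hliL : LinearIndependent L fun j => algebraMap 𝕜 L ∘ c j :=
    linearIndependent_algebraMap_comp_iff.2 hli
  have hspanL : span L (Set.range (A.map (algebraMap 𝕜 L)).col) =
      span L (Set.range fun j => algebraMap 𝕜 L ∘ c j) := by
    have htower (s : Set (m → 𝕜)) : span L ((algebraMap 𝕜 L ∘ ·) '' s) =
        span L ((span 𝕜 s).map ((Algebra.linearMap 𝕜 L).compLeft m) : Set (m → L)) := by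
      rw [Submodule.map_span, span_span_of_tower]
      rfl
    have hcol : (A.map (algebraMap 𝕜 L)).col = (algebraMap 𝕜 L ∘ ·) ∘ A.col := rfl
    rw [hcol, Set.range_comp, Set.range_comp' (algebraMap 𝕜 L ∘ ·) c, htower, htower, hspan]
  rw [rank_eq_finrank_span_cols, hspanL, finrank_span_eq_card hliL, Fintype.card_fin,
    rank_eq_finrank_span_cols]

end RankComparison

theorem stmt0_general {𝕜 ι m₁ n₁ m₂ n₂ : Type*} [Field 𝕜] [Fintype ι] [Finite m₁] [Fintype n₁]
    [Fintype m₂] [Fintype n₂] (hι : Fintype.card ι ≤ 3)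
    (R : ι → Matrix m₁ n₁ 𝕜) (S : ι → Matrix m₂ n₂ 𝕜) :
    (∑ i, R i ⊗ₖ S i).rank ≤ Fintype.card ι * (∑ i, R i ⊗ₖ (S i)ᵀ).rank := by
  let φ := algebraMap 𝕜 (AlgebraicClosure 𝕜)
  have h := rank_sum_kronecker_le_of_infinite hι (fun i => (R i).map φ) fun i => (S i).map φ
  simpa only [← transpose_map, ← map_sum_kronecker, φ, rank_map_algebraMap] using h

theorem stmt0 (m₁ n₁ m₂ n₂ : ℕ)
    (R : Fin 3 → Matrix (Fin m₁) (Fin n₁) ℂ)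
    (S : Fin 3 → Matrix (Fin m₂) (Fin n₂) ℂ)
    (hR : LinearIndependent ℂ R) (hS : LinearIndependent ℂ S) :
    (∑ i, R i ⊗ₖ S i).rank ≤ 3 * (∑ i, R i ⊗ₖ (S i)ᵀ).rank := by
  simpa using stmt0_general (by simp) R S
end

section
/- Let ρ be a positive semidefinite Hermitian complex matrix indexed by (Fin a × Fin b × Fin c) × (Fin a × Fin b × Fin c), with bipartite reduced matrices ρ_AB, ρ_AC, ρ_BC obtained by partial trace. If rank(ρ_AB) ≤ 3, then rank(ρ_AB) · rank(ρ_AC) ≥ rank(ρ_BC). -/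
open Matrix
open scoped ComplexOrder

/-- Reduced matrix on systems A,B (tracing out C). -/
noncomputable def rhoAB {a b c : ℕ} (ρ : Matrix (Fin a × Fin b × Fin c) (Fin a × Fin b × Fin c) ℂ) :
    Matrix (Fin a × Fin b) (Fin a × Fin b) ℂ :=
  Matrix.of fun p q => ∑ k : Fin c, ρ (p.1, p.2, k) (q.1, q.2, k)

/-- Reduced matrix on systems A,C (tracing out B). -/
noncomputable def rhoAC {a b c : ℕ} (ρ : Matrix (Fin a × Fin b × Fin c) (Fin a × Fin b × Fin c) ℂ) :
    Matrix (Fin a × Fin c) (Fin a × Fin c) ℂ :=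
  Matrix.of fun p q => ∑ j : Fin b, ρ (p.1, j, p.2) (q.1, j, q.2)

/-- Reduced matrix on systems B,C (tracing out A). -/
noncomputable def rhoBC {a b c : ℕ} (ρ : Matrix (Fin a × Fin b × Fin c) (Fin a × Fin b × Fin c) ℂ) :
    Matrix (Fin b × Fin c) (Fin b × Fin c) ℂ :=
  Matrix.of fun p q => ∑ i : Fin a, ρ (i, p.1, p.2) (i, q.1, q.2)

/-!
Write `ρ = Z * Zᴴ` and regard `Z` as an operator `T` from `B ⊗ N` to `A ⊗ C`, where `N` purifies
`ρ`. The ranks of `ρ_AC`, `ρ_BC` and `ρ_AB` are then those of `T`, of its partial transpose, and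
of its realignment, and the last one is the dimension of the span of the blocks `T i j`. So it
suffices to show `rank (partialTranspose T) ≤ dim (blockSpan T) * rank T`, which holds over any
infinite field.

Choose `x` for which the map `y ↦ ∑ i j, x i * y j • T i j` has maximal rank, and let `V` be its
range. By maximality, every other `x'` sends the kernel of this map into `V`. Choose `Q`, of rank at
most `dim V`, such that `1 - Q` takes values in that kernel, and choose `P`, acting on `C`, with
`P * v = v` for all `v ∈ V`. Then `T` is the sum of

* `T₁ = (1 ⊗ (1 - P)) * T`, whose block span has lost the dimension of `V`,
* `(1 ⊗ P) * T * (Q ⊗ 1)`, whose partial transpose has the factor `Qᵀ ⊗ P`, and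
* `T₂ = T * ((1 - Q) ⊗ 1)`, whose block span lies in `V`.

Frobenius' rank inequality allows `P` to be chosen with `rank P + rank T₂ ≤ rank T`, and induction
applied to `T₁` and `T₂` bounds the rank by
`dim (blockSpan T₁) * rank T + dim V * (rank P + rank T₂) ≤ dim (blockSpan T) * rank T`.
-/

open Module
open LinearMap (range ker)
open scoped Kronecker

section LinearMaps

open LinearMap

variable {K E F X : Type*} [Field K] [AddCommGroup E] [Module K E] [AddCommGroup F] [Module K F]
  [AddCommGroup X] [Module K X]

lemma exists_comp_comp_eq_self (f : E →ₗ[K] F) : ∃ g : F →ₗ[K] E, f ∘ₗ g ∘ₗ f = f := by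
  obtain ⟨r, hr⟩ := exists_leftInverse_of_injective (range f).subtype (Submodule.ker_subtype _)
  obtain ⟨s, hs⟩ := exists_rightInverse_of_surjective f.rangeRestrict (range_rangeRestrict f)
  refine ⟨s ∘ₗ r, LinearMap.ext fun x => ?_⟩
  have hrx : r (f x) = f.rangeRestrict x := congr($hr (f.rangeRestrict x))
  have hsx : f.rangeRestrict (s (f.rangeRestrict x)) = f.rangeRestrict x := congr($hs _)
  simp only [LinearMap.comp_apply, hrx]
  exact congrArg Subtype.val hsx

lemma finrank_map_add_finrank_le [FiniteDimensional K E] (f : E →ₗ[K] F) {V W : Submodule K E}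
    (hVW : V ≤ W) (hV : V ≤ ker f) : finrank K (W.map f) + finrank K V ≤ finrank K W := by
  have hker : finrank K V ≤ finrank K (ker (f.domRestrict W)) := by
    rw [← Submodule.finrank_map_subtype_eq]
    exact Submodule.finrank_mono fun v hv => ⟨⟨v, hVW hv⟩, hV hv, rfl⟩
  have := (f.domRestrict W).finrank_range_add_finrank_ker
  rw [range_domRestrict] at this
  omega

lemma exists_ne_zero_injective_add_smul [Infinite K] [FiniteDimensional K E] (f g : E →ₗ[K] F)
    (hf : Function.Injective f) : ∃ t : K, t ≠ 0 ∧ Function.Injective (f + t • g) := by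
  obtain ⟨r, hr⟩ := exists_leftInverse_of_injective f (ker_eq_bot.2 hf)
  have hfinite := Module.End.finite_spectrum (-(r ∘ₗ g) : End K E)
  obtain ⟨s, hs⟩ := (hfinite.union (Set.finite_singleton 0)).exists_notMem
  rw [Set.mem_union, Set.mem_singleton_iff, not_or, spectrum.notMem_iff, sub_neg_eq_add] at hs
  obtain ⟨hunit, hs0⟩ := hs
  refine ⟨s⁻¹, inv_ne_zero hs0, Function.Injective.of_comp (f := s • r) ?_⟩
  convert ((Module.End.isUnit_iff _).1 hunit).injective using 1
  ext x
  have hrx : r (f x) = x := congr($hr x)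
  simp [hrx, hs0, algebraMap_end_apply]

lemma map_ker_le_range_of_finrank_range_le [Infinite K] [FiniteDimensional K F] {f g : E →ₗ[K] F}
    (h : ∀ t : K, finrank K (range (f + t • g)) ≤ finrank K (range f)) :
    (ker f).map g ≤ range f := by
  rintro _ ⟨y, hy : f y = 0, rfl⟩
  by_contra hgy
  have hgy0 : g y ≠ 0 := fun h0 => hgy (h0.symm ▸ zero_mem (range f))
  obtain ⟨s, hs⟩ := exists_rightInverse_of_surjective f.rangeRestrict (range_rangeRestrict f)
  have hs (v : range f) : f (s v) = v := congr(($hs v : F))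
  have hinj : Function.Injective ((range f).subtype.coprod (toSpanSingleton K F (g y))) := by
    rw [← ker_eq_bot, ker_coprod_of_disjoint_range, Submodule.ker_subtype, ker_toSpanSingleton,
      Submodule.prod_bot]
    · exact hgy0
    · rw [Submodule.range_subtype, range_toSpanSingleton]
      exact (Submodule.disjoint_span_singleton' hgy0).2 hgy
  obtain ⟨t, ht, hinj_t⟩ := exists_ne_zero_injective_add_smul _ ((g ∘ₗ s).coprod 0) hinj
  have hfactor : (range f).subtype.coprod (toSpanSingleton K F (g y)) + t • (g ∘ₗ s).coprod 0 =
      (f + t • g) ∘ₗ s.coprod (toSpanSingleton K E (t⁻¹ • y)) := by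
    ext <;> simp [hs, hy, ht]
  rw [hfactor] at hinj_t
  have hlt : finrank K (range f) + 1 ≤ finrank K (range (f + t • g)) := by
    simpa [finrank_range_of_inj hinj_t] using
      Submodule.finrank_mono (range_comp_le_range (s.coprod (toSpanSingleton K E (t⁻¹ • y)))
        (f + t • g))
  exact absurd (h t) (by omega)

lemma exists_forall_map_ker_le_range [Infinite K] [FiniteDimensional K F]
    (β : X →ₗ[K] E →ₗ[K] F) : ∃ x₀, ∀ x, (ker (β x₀)).map (β x) ≤ range (β x₀) := by
  have hbdd : BddAbove (Set.range fun x => finrank K (range (β x))) :=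
    ⟨finrank K F, by rintro _ ⟨x, rfl⟩; exact Submodule.finrank_le _⟩
  obtain ⟨x₀, hx₀⟩ := Nat.sSup_mem (Set.range_nonempty _) hbdd
  refine ⟨x₀, fun x => map_ker_le_range_of_finrank_range_le fun t => ?_⟩
  rw [← map_smul, ← map_add]
  exact (le_csSup hbdd ⟨_, rfl⟩).trans hx₀.ge

end LinearMaps

section MatrixRank

variable {K l m n o : Type*} [Field K]

lemma rank_add_le [Finite m] [Fintype n] (M N : Matrix m n K) :
    (M + N).rank ≤ M.rank + N.rank := by
  have hle : range (M + N).mulVecLin ≤ range M.mulVecLin ⊔ range N.mulVecLin := by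
    rw [mulVecLin_add]
    exact LinearMap.range_add_le _ _
  exact (Submodule.finrank_mono hle).trans (Submodule.finrank_add_le_finrank_add_finrank _ _)

lemma rank_mul_add_rank_mul_le_rank [Fintype m] [Fintype n] [Fintype o] (M : Matrix l m K)
    (T : Matrix m n K) (N : Matrix n o K) (h : M * T * N = 0) :
    (M * T).rank + (T * N).rank ≤ T.rank := by
  have hker : range (T * N).mulVecLin ≤ ker M.mulVecLin := by
    rw [LinearMap.range_le_ker_iff, ← mulVecLin_mul, ← Matrix.mul_assoc, h, mulVecLin_zero]
  have hrange : range (T * N).mulVecLin ≤ range T.mulVecLin := by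
    rw [mulVecLin_mul]
    exact LinearMap.range_comp_le_range _ _
  have hmap : (range T.mulVecLin).map M.mulVecLin = range (M * T).mulVecLin := by
    rw [mulVecLin_mul, LinearMap.range_comp]
  rw [Matrix.rank, ← hmap]
  exact finrank_map_add_finrank_le M.mulVecLin hrange hker

lemma exists_mul_mul_eq_self [Fintype m] [Fintype n] (M : Matrix m n K) :
    ∃ G : Matrix n m K, M * G * M = M := by
  classical
  obtain ⟨g, hg⟩ := exists_comp_comp_eq_self (toLin' M)
  refine ⟨LinearMap.toMatrix' g, toLin'.injective ?_⟩
  rw [Matrix.mul_assoc, toLin'_mul, toLin'_mul, toLin'_toMatrix', hg]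

lemma exists_eq_mul_rank [Finite m] [Fintype n] (M : Matrix m n K) :
    ∃ (U : Matrix m (Fin M.rank) K) (V : Matrix (Fin M.rank) n K), M = U * V := by
  classical
  let b : Basis (Fin M.rank) K (range M.mulVecLin) := finBasis K _
  let col (j : n) : range M.mulVecLin := ⟨M.col j, Pi.single j 1, by simp⟩
  refine ⟨.of fun i r => (b r).1 i, .of fun r j => b.repr (col j) r, ?_⟩
  ext i j
  calc M i j = (∑ r, b.repr (col j) r • b r : range M.mulVecLin).1 i := by rw [b.sum_repr]; rfl
    _ = _ := by simp [-Basis.sum_repr, Matrix.mul_apply, mul_comm]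

lemma eq_zero_of_rank_eq_zero [Finite m] [Fintype n] {M : Matrix m n K} (h : M.rank = 0) :
    M = 0 := by
  classical
  refine toLin'.map_eq_zero_iff.1 (LinearMap.range_eq_bot.1 ?_)
  exact Submodule.finrank_eq_zero.1 h

lemma rank_kronecker_le [Finite l] [Fintype m] [Finite n] [Fintype o] (M : Matrix l m K)
    (N : Matrix n o K) :
    (M ⊗ₖ N).rank ≤ M.rank * N.rank := by
  obtain ⟨U, V, hM⟩ := exists_eq_mul_rank M
  obtain ⟨U', V', hN⟩ := exists_eq_mul_rank N
  have hMN : M ⊗ₖ N = (U ⊗ₖ U') * (V ⊗ₖ V') := by rw [← mul_kronecker_mul, ← hM, ← hN]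
  calc (M ⊗ₖ N).rank ≤ (U ⊗ₖ U').rank := hMN ▸ rank_mul_le_left _ _
    _ ≤ Fintype.card (Fin M.rank × Fin N.rank) := rank_le_card_width _
    _ = M.rank * N.rank := by simp

end MatrixRank

section PartialTranspose

variable {K A B C D : Type*} [Field K]

/-- The partial transpose of an operator `T : K^B ⊗ K^D → K^A ⊗ K^C` in the factors `A` and `B`: it
transposes the arrangement of the `A × B` blocks of `T`, but not the blocks themselves. -/
def partialTranspose (T : Matrix (A × C) (B × D) K) : Matrix (B × C) (A × D) K :=
  .of fun p q => T (q.1, p.2) (p.1, q.2)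

lemma partialTranspose_add (S T : Matrix (A × C) (B × D) K) :
    partialTranspose (S + T) = partialTranspose S + partialTranspose T := rfl

/-- The realignment of `T : K^B ⊗ K^D → K^A ⊗ K^C`: its row `(i, j)` lists the entries of the
`(i, j)` block of `T`, so that its rank is the operator Schmidt rank of `T`. -/
def realign (T : Matrix (A × C) (B × D) K) : Matrix (A × B) (C × D) K :=
  .of fun p q => T (p.1, q.1) (p.2, q.2)

variable [Fintype B] [Fintype D] [DecidableEq D]

lemma partialTranspose_mul_mul [Fintype A] [Fintype C] [DecidableEq A] (P : Matrix C C K)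
    (T : Matrix (A × C) (B × D) K) (Q : Matrix B B K) :
    partialTranspose (((1 : Matrix A A K) ⊗ₖ P) * T * (Q ⊗ₖ (1 : Matrix D D K))) =
      (Qᵀ ⊗ₖ P) * partialTranspose T := by
  ext ⟨j, k⟩ ⟨i, d⟩
  simp only [partialTranspose, Matrix.mul_apply, Fintype.sum_prod_type, kronecker_apply,
    transpose_apply, Matrix.one_apply, of_apply, ite_mul, mul_ite, mul_one, one_mul, mul_zero,
    zero_mul, Finset.sum_ite_irrel, Finset.sum_const_zero, Finset.sum_ite_eq, Finset.sum_ite_eq',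
    Finset.mem_univ, if_true, Finset.sum_mul]
  exact Finset.sum_congr rfl fun _ _ => Finset.sum_congr rfl fun _ _ => by ring

/-- The ampliation `y ⊗ 1 : K^D → K^B ⊗ K^D` of a vector `y`, as a linear function of `y`. -/
def ampliate (K B D : Type*) [Field K] [DecidableEq D] : (B → K) →ₗ[K] Matrix (B × D) D K where
  toFun y := .of fun p d => y p.1 * (1 : Matrix D D K) p.2 d
  map_add' _ _ := by ext; simp [add_mul]
  map_smul' _ _ := by ext; simp [mul_assoc]

lemma kronecker_one_mul_ampliate (Q : Matrix A B K) (y : B → K) :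
    (Q ⊗ₖ (1 : Matrix D D K)) * ampliate K B D y = ampliate K A D (Q *ᵥ y) := by
  ext p d
  simp [ampliate, Matrix.mul_apply, Matrix.mulVec, dotProduct, Fintype.sum_prod_type,
    Matrix.one_apply, mul_ite]

lemma mul_ampliate_single [DecidableEq B] (M : Matrix A (B × D) K) (j : B) :
    M * ampliate K B D (Pi.single j 1) = M.submatrix id (Prod.mk j) := by
  ext k d
  simp [ampliate, Matrix.mul_apply, Fintype.sum_prod_type, Pi.single_apply, Matrix.one_apply]

lemma eq_zero_of_forall_mul_ampliate {M : Matrix A (B × D) K}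
    (h : ∀ y, M * ampliate K B D y = 0) : M = 0 := by
  classical
  ext k ⟨j, d⟩
  simpa [mul_ampliate_single] using congr($(h (Pi.single j 1)) k d)

variable [Fintype A] [Fintype C] [DecidableEq C]

/-- The combination `∑ i j, x i * y j • T i j` of the blocks `T i j` of `T`, as a bilinear function
of `x` and `y`. -/
def blockForm (T : Matrix (A × C) (B × D) K) : (A → K) →ₗ[K] (B → K) →ₗ[K] Matrix C D K :=
  LinearMap.mk₂ K (fun x y => (ampliate K A C x)ᵀ * T * ampliate K B D y)
    (by simp [Matrix.add_mul]) (by simp) (by simp [Matrix.mul_add]) (by simp)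

/-- The space spanned by the blocks of `T`. -/
def blockSpan (T : Matrix (A × C) (B × D) K) : Submodule K (Matrix C D K) :=
  Submodule.map₂ (blockForm T) ⊤ ⊤

lemma blockForm_apply (T : Matrix (A × C) (B × D) K) (x : A → K) (y : B → K) :
    blockForm T x y = (ampliate K A C x)ᵀ * T * ampliate K B D y := rfl

lemma one_kronecker_mul_ampliate [DecidableEq B] (P : Matrix C D K) (y : B → K) :
    ((1 : Matrix B B K) ⊗ₖ P) * ampliate K B D y = ampliate K B C y * P := by
  ext p d
  simp [ampliate, Matrix.mul_apply, Fintype.sum_prod_type, Matrix.one_apply, mul_ite, mul_comm]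

lemma blockForm_mul_kronecker_one (T : Matrix (A × C) (B × D) K) (Q : Matrix B B K) (x : A → K)
    (y : B → K) : blockForm (T * (Q ⊗ₖ (1 : Matrix D D K))) x y = blockForm T x (Q *ᵥ y) := by
  simp only [blockForm_apply, Matrix.mul_assoc, kronecker_one_mul_ampliate]

lemma blockForm_one_kronecker_mul [DecidableEq A] (T : Matrix (A × C) (B × D) K) (P : Matrix C C K)
    (x : A → K) (y : B → K) :
    blockForm (((1 : Matrix A A K) ⊗ₖ P) * T) x y = P * blockForm T x y := by
  have hP : (ampliate K A C x)ᵀ * ((1 : Matrix A A K) ⊗ₖ P) = P * (ampliate K A C x)ᵀ := by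
    simpa [transpose_mul, ← kroneckerMap_transpose] using
      congr($(one_kronecker_mul_ampliate Pᵀ x)ᵀ)
  simp only [blockForm_apply, ← Matrix.mul_assoc, hP]

lemma blockForm_single_single [DecidableEq A] [DecidableEq B] (T : Matrix (A × C) (B × D) K)
    (i : A) (j : B) :
    blockForm T (Pi.single i 1) (Pi.single j 1) = T.submatrix (Prod.mk i) (Prod.mk j) := by
  have hi : (ampliate K A C (Pi.single i 1))ᵀ * T = T.submatrix (Prod.mk i) id := by
    simpa [transpose_mul] using congr($(mul_ampliate_single Tᵀ i)ᵀ)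
  rw [blockForm_apply, mul_ampliate_single, hi]
  rfl

lemma blockForm_injective :
    Function.Injective (blockForm : Matrix (A × C) (B × D) K → _) := by
  classical
  intro T T' h
  ext ⟨i, k⟩ ⟨j, d⟩
  simpa [blockForm_single_single] using congr($h (Pi.single i 1) (Pi.single j 1) k d)

lemma blockSpan_eq_span_range (T : Matrix (A × C) (B × D) K) :
    blockSpan T =
      Submodule.span K (Set.range fun p : A × B => T.submatrix (Prod.mk p.1) (Prod.mk p.2)) := by
  classical
  rw [blockSpan, ← (Pi.basisFun K A).span_eq, ← (Pi.basisFun K B).span_eq,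
    Submodule.map₂_span_span, Set.image2_range]
  simp only [Pi.basisFun_apply, blockForm_single_single]

lemma finrank_blockSpan (T : Matrix (A × C) (B × D) K) :
    finrank K (blockSpan T) = (realign T).rank := by
  let vec : Matrix C D K ≃ₗ[K] C × D → K :=
    (Matrix.ofLinearEquiv K).symm ≪≫ₗ (LinearEquiv.curry K K C D).symm
  have hrow : (blockSpan T).map vec.toLinearMap =
      Submodule.span K (Set.range (realign T).row) := by
    rw [blockSpan_eq_span_range, Submodule.map_span, ← Set.range_comp]
    rfl
  rw [rank_eq_finrank_span_row, ← hrow, LinearEquiv.finrank_map_eq]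

lemma blockSpan_le_iff {T : Matrix (A × C) (B × D) K} {V : Submodule K (Matrix C D K)} :
    blockSpan T ≤ V ↔ ∀ x y, blockForm T x y ∈ V := by
  simp [blockSpan, Submodule.map₂_le]

lemma blockForm_mem_blockSpan (T : Matrix (A × C) (B × D) K) (x : A → K) (y : B → K) :
    blockForm T x y ∈ blockSpan T :=
  blockSpan_le_iff.1 le_rfl x y

lemma one_kronecker_mul_eq_self [DecidableEq A] {P : Matrix C C K} {T : Matrix (A × C) (B × D) K}
    (h : ∀ v ∈ blockSpan T, P * v = v) : ((1 : Matrix A A K) ⊗ₖ P) * T = T :=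
  blockForm_injective <| LinearMap.ext₂ fun x y => by
    rw [blockForm_one_kronecker_mul, h _ (blockForm_mem_blockSpan T x y)]

lemma finrank_blockSpan_one_kronecker_mul_add_le [DecidableEq A] {P : Matrix C C K}
    {T : Matrix (A × C) (B × D) K} {V : Submodule K (Matrix C D K)} (hV : V ≤ blockSpan T)
    (hP : ∀ v ∈ V, P * v = 0) :
    finrank K (blockSpan (((1 : Matrix A A K) ⊗ₖ P) * T)) + finrank K V ≤
      finrank K (blockSpan T) := by
  have hmap : blockSpan (((1 : Matrix A A K) ⊗ₖ P) * T) ≤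
      (blockSpan T).map (mulLeftLinearMap D K P) := blockSpan_le_iff.2 fun x y =>
    ⟨_, blockForm_mem_blockSpan T x y, (blockForm_one_kronecker_mul T P x y).symm⟩
  exact (Nat.add_le_add_right (Submodule.finrank_mono hmap) _).trans
    (finrank_map_add_finrank_le _ hV hP)

lemma exists_reducing_pair [Infinite K] [DecidableEq B]
    {T : Matrix (A × C) (B × D) K} (hT : T ≠ 0) :
    ∃ (V : Submodule K (Matrix C D K)) (P : Matrix C C K) (Q : Matrix B B K),
      V ≠ ⊥ ∧ V ≤ blockSpan T ∧ (∀ v ∈ V, P * v = v) ∧ Q.rank ≤ finrank K V ∧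
      blockSpan (T * ((1 - Q) ⊗ₖ (1 : Matrix D D K))) ≤ V ∧
      P.rank + (T * ((1 - Q) ⊗ₖ (1 : Matrix D D K))).rank ≤ T.rank := by
  obtain ⟨x, hx⟩ := exists_forall_map_ker_le_range (blockForm T)
  obtain ⟨g, hg⟩ := exists_comp_comp_eq_self (blockForm T x)
  obtain ⟨G, hG⟩ := exists_mul_mul_eq_self ((ampliate K A C x)ᵀ * T)
  set q := LinearMap.toMatrix' (g ∘ₗ blockForm T x) with hq
  have hQ (y : B → K) : blockForm T x ((1 - q) *ᵥ y) = 0 := by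
    rw [Matrix.sub_mulVec, one_mulVec, map_sub, sub_eq_zero, hq, LinearMap.toMatrix'_mulVec]
    exact congr($hg.symm y)
  refine ⟨range (blockForm T x), (ampliate K A C x)ᵀ * T * G, q, fun hbot => hT ?_, ?_, ?_, ?_,
    ?_, ?_⟩
  · have hker : ker (blockForm T x) = ⊤ := LinearMap.ker_eq_top.2 (LinearMap.range_eq_bot.1 hbot)
    refine blockForm_injective (LinearMap.ext₂ fun x' y => ?_)
    have hy : blockForm T x' y ∈ range (blockForm T x) := hx x' ⟨y, hker ▸ trivial, rfl⟩
    rw [hbot, Submodule.mem_bot] at hy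
    rw [hy, blockForm_apply, Matrix.mul_zero, Matrix.zero_mul]
  · rintro _ ⟨y, rfl⟩
    exact blockForm_mem_blockSpan T x y
  · rintro _ ⟨y, rfl⟩
    rw [blockForm_apply, ← Matrix.mul_assoc, hG]
  · rw [Matrix.rank, ← toLin'_apply', hq, toLin'_toMatrix', LinearMap.range_comp]
    exact Submodule.finrank_map_le _ _
  · exact blockSpan_le_iff.2 fun x' y => by
      rw [blockForm_mul_kronecker_one]
      exact hx x' ⟨_, hQ y, rfl⟩
  · have hzero : (ampliate K A C x)ᵀ * T * ((1 - q) ⊗ₖ (1 : Matrix D D K)) = 0 :=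
      eq_zero_of_forall_mul_ampliate fun y => by
        rw [Matrix.mul_assoc, kronecker_one_mul_ampliate]
        exact hQ y
    exact (Nat.add_le_add_right (rank_mul_le_left _ _) _).trans
      (rank_mul_add_rank_mul_le_rank _ _ _ hzero)

lemma rank_partialTranspose_le_add [DecidableEq A] [DecidableEq B] {P : Matrix C C K}
    {Q : Matrix B B K} {T : Matrix (A × C) (B × D) K}
    (hP : ∀ v ∈ blockSpan (T * ((1 - Q) ⊗ₖ (1 : Matrix D D K))), P * v = v) :
    (partialTranspose T).rank ≤
      (partialTranspose (((1 : Matrix A A K) ⊗ₖ (1 - P)) * T)).rank + Q.rank * P.rank +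
        (partialTranspose (T * ((1 - Q) ⊗ₖ (1 : Matrix D D K)))).rank := by
  have hQ_add : (Q ⊗ₖ (1 : Matrix D D K)) + (1 - Q) ⊗ₖ 1 = 1 := by
    rw [← add_kronecker, add_sub_cancel, one_kronecker_one]
  have hP_add : ((1 : Matrix A A K) ⊗ₖ (1 - P)) + 1 ⊗ₖ P = 1 := by
    rw [← kronecker_add, sub_add_cancel, one_kronecker_one]
  have hsum : partialTranspose T =
      partialTranspose (((1 : Matrix A A K) ⊗ₖ (1 - P)) * T) +
        ((Qᵀ ⊗ₖ P) * partialTranspose T +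
          partialTranspose (T * ((1 - Q) ⊗ₖ (1 : Matrix D D K)))) := by
    rw [← partialTranspose_mul_mul, ← one_kronecker_mul_eq_self hP, ← Matrix.mul_assoc,
      ← partialTranspose_add, ← partialTranspose_add, ← Matrix.mul_add, hQ_add, Matrix.mul_one,
      ← Matrix.add_mul, hP_add, Matrix.one_mul]
  have hmid : ((Qᵀ ⊗ₖ P) * partialTranspose T).rank ≤ Q.rank * P.rank :=
    Q.rank_transpose ▸ (rank_mul_le_left _ _).trans (rank_kronecker_le _ _)
  conv_lhs => rw [hsum]
  rw [add_assoc]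
  exact (rank_add_le _ _).trans <| Nat.add_le_add_left
    ((rank_add_le _ _).trans (Nat.add_le_add_right hmid _)) _

theorem rank_partialTranspose_le [Infinite K] (T : Matrix (A × C) (B × D) K) :
    (partialTranspose T).rank ≤ finrank K (blockSpan T) * T.rank := by
  classical
  induction hN : finrank K (blockSpan T) + T.rank using Nat.strong_induction_on generalizing T with
  | _ N ih =>
  rcases eq_or_ne T 0 with rfl | hT
  · exact (rank_zero (R := K) (m := B × C) (n := A × D)).trans_le (Nat.zero_le _)
  obtain ⟨V, P, Q, hV0, hVT, hPV, hQ, hT₂V, hrank⟩ := exists_reducing_pair hT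
  have hsplit := rank_partialTranspose_le_add fun v hv => hPV v (hT₂V hv)
  set T₁ := ((1 : Matrix A A K) ⊗ₖ (1 - P)) * T
  set T₂ := T * ((1 - Q) ⊗ₖ (1 : Matrix D D K))
  have hdim : finrank K (blockSpan T₁) + finrank K V ≤ finrank K (blockSpan T) :=
    finrank_blockSpan_one_kronecker_mul_add_le hVT fun v hv => by
      rw [Matrix.sub_mul, Matrix.one_mul, hPV v hv, sub_self]
  have hT₁ : T₁.rank ≤ T.rank := rank_mul_le_right _ _
  have hT₂ : finrank K (blockSpan T₂) ≤ finrank K V := Submodule.finrank_mono hT₂V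
  have hV : 0 < finrank K V := Submodule.one_le_finrank_iff.2 hV0
  have hP : 0 < P.rank := by
    rw [Nat.pos_iff_ne_zero]
    refine fun hP => hV0 ((Submodule.eq_bot_iff V).2 fun v hv => ?_)
    rw [← hPV v hv, eq_zero_of_rank_eq_zero hP, Matrix.zero_mul]
  calc (partialTranspose T).rank
    _ ≤ finrank K (blockSpan T₁) * T₁.rank + Q.rank * P.rank +
          finrank K (blockSpan T₂) * T₂.rank := by
        grw [hsplit, ih _ (by omega) T₁ rfl, ih _ (by omega) T₂ rfl]
    _ ≤ finrank K (blockSpan T₁) * T.rank + finrank K V * P.rank + finrank K V * T₂.rank := by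
        gcongr
    _ = finrank K (blockSpan T₁) * T.rank + finrank K V * (P.rank + T₂.rank) := by ring
    _ ≤ (finrank K (blockSpan T₁) + finrank K V) * T.rank := by grw [hrank, add_mul]
    _ ≤ finrank K (blockSpan T) * T.rank := by gcongr

end PartialTranspose

section Purification

variable {a b c : ℕ} {n : Type*}

/-- A matrix `Z` with `ρ = Z * Zᴴ`, viewed as a purification of `ρ` with `n` as the purifying
party, across the cut `AC | BN`. -/
def purificationAC (Z : Matrix (Fin a × Fin b × Fin c) n ℂ) :
    Matrix (Fin a × Fin c) (Fin b × n) ℂ :=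
  .of fun p q => Z (p.1, q.1, p.2) q.2

variable [Fintype n] (Z : Matrix (Fin a × Fin b × Fin c) n ℂ)

lemma rank_rhoAB_mul_conjTranspose :
    (rhoAB (Z * Zᴴ)).rank = (realign (purificationAC Z)).rank := by
  rw [← rank_self_mul_conjTranspose (realign _)]
  congr 1
  ext p q
  simp [rhoAB, realign, purificationAC, Matrix.mul_apply, Fintype.sum_prod_type]

lemma rank_rhoAC_mul_conjTranspose : (rhoAC (Z * Zᴴ)).rank = (purificationAC Z).rank := by
  rw [← rank_self_mul_conjTranspose (purificationAC Z)]
  congr 1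
  ext p q
  simp [rhoAC, purificationAC, Matrix.mul_apply, Fintype.sum_prod_type]

lemma rank_rhoBC_mul_conjTranspose :
    (rhoBC (Z * Zᴴ)).rank = (partialTranspose (purificationAC Z)).rank := by
  rw [← rank_self_mul_conjTranspose (partialTranspose _)]
  congr 1
  ext p q
  simp [rhoBC, partialTranspose, purificationAC, Matrix.mul_apply, Fintype.sum_prod_type]

end Purification

theorem stmt4_general (a b c : ℕ)
    (ρ : Matrix (Fin a × Fin b × Fin c) (Fin a × Fin b × Fin c) ℂ) (hρ : ρ.PosSemidef) :
    (rhoBC ρ).rank ≤ (rhoAB ρ).rank * (rhoAC ρ).rank := by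
  obtain ⟨Z, rfl⟩ : ∃ Z, ρ = Z * Zᴴ := by
    open scoped MatrixOrder in
    exact CStarAlgebra.nonneg_iff_eq_mul_star_self.mp hρ.nonneg
  rw [rank_rhoAB_mul_conjTranspose, rank_rhoAC_mul_conjTranspose, rank_rhoBC_mul_conjTranspose,
    ← finrank_blockSpan]
  exact rank_partialTranspose_le _

theorem stmt4 (a b c : ℕ) (ρ : Matrix (Fin a × Fin b × Fin c) (Fin a × Fin b × Fin c) ℂ)
    (hρ : ρ.PosSemidef) (hAB : (rhoAB ρ).rank ≤ 3) :
    (rhoBC ρ).rank ≤ (rhoAB ρ).rank * (rhoAC ρ).rank :=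
  stmt4_general a b c ρ hρ
end

section
/- Let ρ be a positive semidefinite Hermitian complex matrix indexed by (Fin a × Fin b × Fin c) × (Fin a × Fin b × Fin c), with bipartite reduced matrices ρ_AB, ρ_AC, ρ_BC obtained by partial trace. If rank(ρ_AB) = 2 and rank(ρ_AC) = 2, then rank(ρ_BC) ≤ 4. -/
open Matrix
open scoped ComplexOrder

/-!
A purification of `ρ` is a four-party tensor `T` on parties A, B, C, D, and the ranks of the reduced
matrices are the ranks of the flattenings AB|CD, AC|BD and BC|AD of `T`. Call the first two `r` and
`s`, and factor `T` along AB|CD as `∑ₑ Pₑ ⊗ Qₑ` with `r` independent `Pₑ`, regarded as linear maps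
from A to B. For `r ≤ 2`, a pair of maps that are independent but become dependent at every vector
has both ranges in one line, so one of two things happens.
* Some vector of A is sent by the `Pₑ` to independent vectors of B. Then contracting `T` on A and B
  recovers every `Qₑ`, so the unfolding of `T` along C has rank at most `s`.
* All the `Pₑ` take values in one line. Then B splits off from `T` as a tensor factor, and the
  unfoldings along A and D, having ranks at most `r` and `s`, bound the rank of BC|AD by `r * s`.
Exchanging B and C, either the bound follows or the unfoldings along B and C have ranks at most `r`
and `s`, and the rank of BC|AD is at most their product.
-/

section LinearMapPencil

variable {K V W : Type*} [Field K] [AddCommGroup V] [Module K V] [AddCommGroup W] [Module K W]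

theorem mem_span_singleton_of_not_linearIndependent_apply {F G : V →ₗ[K] W} {x y : V}
    (h : ∀ z, ¬ LinearIndependent K ![F z, G z]) (hx : G x = 0) (hy : G y ≠ 0) (hFx : F x ≠ 0) :
    F y ∈ K ∙ F x ∧ G y ∈ K ∙ F x := by
  have hF : ∀ z, G z = G y → ∃ a : K, a • G y = F z := by
    intro z hz
    have hdep := h z
    rw [LinearIndependent.pair_symm_iff, hz, LinearIndependent.pair_iff' hy] at hdep
    push Not at hdep
    exact hdep
  obtain ⟨a, ha⟩ := hF y rfl
  obtain ⟨b, hb⟩ := hF (x + y) (by rw [map_add, hx, zero_add])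
  have hFG : F x = (b - a) • G y := by rw [sub_smul, ha, hb, map_add, add_sub_cancel_right]
  have hba : b - a ≠ 0 := by
    intro h0
    exact hFx (by rw [hFG, h0, zero_smul])
  have hG : G y ∈ K ∙ F x :=
    Submodule.mem_span_singleton.mpr ⟨(b - a)⁻¹, by rw [hFG, inv_smul_smul₀ hba]⟩
  exact ⟨ha ▸ Submodule.smul_mem _ a hG, hG⟩

theorem range_le_span_singleton_of_not_linearIndependent_apply {F G : V →ₗ[K] W} {x : V}
    (h : ∀ z, ¬ LinearIndependent K ![F z, G z]) (hG : G ≠ 0) (hx : G x = 0) (hFx : F x ≠ 0) :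
    F.range ≤ K ∙ F x ∧ G.range ≤ K ∙ F x := by
  obtain ⟨y, hy⟩ : ∃ y, G y ≠ 0 := by
    by_contra! h0
    exact hG (LinearMap.ext h0)
  have hmem {z : V} (hz : G z ≠ 0) : F z ∈ K ∙ F x ∧ G z ∈ K ∙ F x :=
    mem_span_singleton_of_not_linearIndependent_apply h hx hz hFx
  constructor
  · rintro _ ⟨z, rfl⟩
    by_cases hz : G z = 0
    · -- `G` does not vanish at `z + y` and `y`, so `F z` is a difference of two multiples of `F x`.
      have hzy := (hmem (z := z + y) (by rwa [map_add, hz, zero_add])).1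
      rw [map_add] at hzy
      exact (Submodule.add_mem_iff_left _ (hmem hy).1).mp hzy
    · exact (hmem hz).1
  · rintro _ ⟨z, rfl⟩
    by_cases hz : G z = 0
    · rw [hz]
      exact zero_mem _
    · exact (hmem hz).2

theorem exists_linearIndependent_pair_apply_or_range_le_span_singleton {F G : V →ₗ[K] W}
    (hFG : LinearIndependent K ![F, G]) :
    (∃ x, LinearIndependent K ![F x, G x]) ∨
      ∃ w ≠ 0, F.range ≤ K ∙ w ∧ G.range ≤ K ∙ w := by
  by_contra! ⟨hdep, hrange⟩
  obtain ⟨x, hFx⟩ : ∃ x, F x ≠ 0 := by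
    by_contra! h0
    exact hFG.ne_zero 0 (LinearMap.ext h0)
  obtain ⟨c, hc⟩ : ∃ c : K, c • F x = G x := by
    simpa [LinearIndependent.pair_iff' hFx] using hdep x
  -- Subtracting a multiple of `F` from `G` preserves all (in)dependence and achieves `G' x = 0`.
  let G' := (-c) • F + G
  have hG' : G' ≠ 0 :=
    ((LinearIndependent.pair_add_smul_right_iff (-c)).mpr hFG).ne_zero 1
  have hdep' (z : V) : ¬ LinearIndependent K ![F z, G' z] := by
    simpa only [G', LinearMap.add_apply, LinearMap.smul_apply,
      LinearIndependent.pair_add_smul_right_iff] using hdep z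
  obtain ⟨hF, hG⟩ := range_le_span_singleton_of_not_linearIndependent_apply hdep' hG'
    (by simp [G', hc]) hFx
  refine hrange (F x) hFx hF ?_
  rintro _ ⟨z, rfl⟩
  have hGz : G z = G' z + c • F z := by simp [G']
  rw [hGz]
  exact add_mem (hG ⟨z, rfl⟩) (Submodule.smul_mem _ c (hF ⟨z, rfl⟩))

theorem exists_linearIndependent_apply_or_range_le_span_singleton {r : ℕ} (hr : r ≤ 2)
    {F : Fin r → V →ₗ[K] W} (hF : LinearIndependent K F) :
    (∃ x, LinearIndependent K fun e => F e x) ∨ ∃ w ≠ 0, ∀ e, (F e).range ≤ K ∙ w := by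
  interval_cases r
  · exact .inl ⟨0, linearIndependent_empty_type⟩
  · obtain ⟨x, hx⟩ : ∃ x, F 0 x ≠ 0 := by
      by_contra! h0
      exact hF.ne_zero 0 (LinearMap.ext h0)
    exact .inl ⟨x, linearIndependent_unique_iff.mpr hx⟩
  · rw [← FinVec.etaExpand_eq F] at hF
    obtain ⟨x, hx⟩ | ⟨w, hw, h₀, h₁⟩ :=
      exists_linearIndependent_pair_apply_or_range_le_span_singleton hF
    · refine .inl ⟨x, ?_⟩
      rwa [← FinVec.etaExpand_eq fun e => F e x]
    · exact .inr ⟨w, hw, Fin.forall_fin_two.mpr ⟨h₀, h₁⟩⟩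

end LinearMapPencil

section RankFactorization

variable {K m n ι : Type*} [Field K]

theorem rank_le_card_of_forall_eq_sum [Fintype n] [Fintype ι] {M : Matrix m n K} (u : m → ι → K)
    (v : ι → n → K) (h : ∀ i j, M i j = ∑ e, u i e * v e j) : M.rank ≤ Fintype.card ι := by
  have hM : M = of u * of v := Matrix.ext h
  rw [hM]
  exact (rank_mul_le_left _ _).trans (rank_le_card_width _)

theorem exists_linearIndependent_col_mul_eq [Finite m] [Fintype n] (M : Matrix m n K) :
    ∃ (U : Matrix m (Fin M.rank) K) (V : Matrix (Fin M.rank) n K),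
      LinearIndependent K U.col ∧ U * V = M := by
  let b : Module.Basis (Fin M.rank) K (Submodule.span K (Set.range M.col)) :=
    Module.finBasisOfFinrankEq K _ M.rank_eq_finrank_span_cols.symm
  have hcol (j : n) : M.col j ∈ Submodule.span K (Set.range M.col) :=
    Submodule.subset_span ⟨j, rfl⟩
  refine ⟨of fun i e => (b e : m → K) i, of fun e j => b.repr ⟨M.col j, hcol j⟩ e,
    b.linearIndependent.map' (Submodule.subtype _) (Submodule.ker_subtype _), ?_⟩
  ext i j
  have hsum := congrFun (congrArg Subtype.val (b.sum_repr ⟨M.col j, hcol j⟩)) i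
  simpa only [Submodule.coe_sum, Submodule.coe_smul, Finset.sum_apply, Pi.smul_apply, smul_eq_mul,
    mul_apply, of_apply, col_apply, mul_comm] using hsum

theorem exists_mul_eq_one_of_linearIndependent_col [Fintype m] [Finite n] [DecidableEq n]
    {M : Matrix m n K} (h : LinearIndependent K M.col) : ∃ L : Matrix n m K, L * M = 1 := by
  classical
  have := Fintype.ofFinite n
  obtain ⟨g, hg⟩ := M.toLin'.exists_leftInverse_of_injective
    (LinearMap.ker_eq_bot.mpr (mulVec_injective_iff.mpr h))
  refine ⟨LinearMap.toMatrix' g, ?_⟩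
  rw [← LinearMap.toMatrix'_toLin' M, ← LinearMap.toMatrix'_comp, hg, LinearMap.toMatrix'_id]

end RankFactorization

section Tensor

variable {K α β γ δ ι : Type*}

/-- The flattening of a four-party tensor along the bipartition `(1, 2) | (3, 4)`. The flattening
along another bipartition is obtained by permuting the arguments of the tensor. -/
def flattening (T : α → β → γ → δ → K) : Matrix (α × β) (γ × δ) K :=
  of fun p q => T p.1 p.2 q.1 q.2

/-- The mode-1 unfolding of a four-party tensor: the first party against the other three. The
unfoldings in the other modes are obtained by permuting the arguments of the tensor. -/
def unfolding (T : α → β → γ → δ → K) : Matrix α (β × γ × δ) K :=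
  of fun i q => T i q.1 q.2.1 q.2.2

variable [Field K]

theorem rank_flattening_swap_left [Fintype γ] [Fintype δ] (T : α → β → γ → δ → K) :
    (flattening fun j i k d => T i j k d).rank = (flattening T).rank :=
  rank_submatrix (flattening T) (Equiv.prodComm β α) (Equiv.refl _)

theorem rank_unfolding_le_of_forall_eq_mul [Finite α] [Fintype β] [Fintype γ] [Fintype δ]
    {T : α → β → γ → δ → K} {w : β → K} (hw : w ≠ 0) {t : α → γ → δ → K}
    (hT : ∀ i j k d, T i j k d = w j * t i k d) :
    (unfolding fun i d k j => T i j k d).rank ≤ (flattening T).rank := by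
  obtain ⟨j₀, hj₀⟩ := Function.ne_iff.mp hw
  obtain ⟨U, V, -, hUV⟩ := exists_linearIndependent_col_mul_eq (flattening T)
  have hT₀ (i j k d) : T i j k d = w j / w j₀ * ∑ e, U (i, j₀) e * V e (k, d) := by
    calc T i j k d = w j / w j₀ * T i j₀ k d := by
          rw [hT, hT, ← mul_assoc, div_mul_cancel₀ _ hj₀]
      _ = w j / w j₀ * ∑ e, U (i, j₀) e * V e (k, d) :=
          congrArg (w j / w j₀ * ·) (congrFun₂ hUV (i, j₀) (k, d)).symm
  have hrank := rank_le_card_of_forall_eq_sum (M := unfolding fun i d k j => T i j k d)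
    (fun i e => U (i, j₀) e) (fun e q => w q.2.2 / w j₀ * V e (q.2.1, q.1)) fun i ⟨d, k, j⟩ => by
      simp only [unfolding, of_apply]
      rw [hT₀, Finset.mul_sum]
      simp only [mul_left_comm]
  simpa only [Fintype.card_fin] using hrank

variable [Fintype α] [Fintype β] [Fintype δ]

-- Contracting party 1 against `x` and party 2 against a left inverse recovers `V` from `T`.
theorem rank_unfolding_le_of_linearIndependent_contraction [Finite γ] [Fintype ι]
    {T : α → β → γ → δ → K} {U : Matrix (α × β) ι K} {V : Matrix ι (γ × δ) K}
    (hUV : U * V = flattening T) {x : α → K}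
    (hx : LinearIndependent K fun e j => ∑ i, U (i, j) e * x i) :
    (unfolding fun k j i d => T i j k d).rank ≤ (flattening fun i k j d => T i j k d).rank := by
  classical
  obtain ⟨R, S, -, hRS⟩ := exists_linearIndependent_col_mul_eq (flattening fun i k j d => T i j k d)
  obtain ⟨Y, hY⟩ := exists_mul_eq_one_of_linearIndependent_col
    (M := of fun j e => ∑ i, U (i, j) e * x i) hx
  let L : Matrix ι (α × β) K := of fun e p => x p.1 * Y e p.2
  have hL : L * U = 1 := by
    rw [← hY]
    ext e e'
    simp only [L, mul_apply, of_apply, Fintype.sum_prod_type_right, Finset.mul_sum]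
    exact Fintype.sum_congr _ _ fun j => Fintype.sum_congr _ _ fun i => by ring
  have hLT : L * flattening T = V := by
    rw [← hUV, ← Matrix.mul_assoc, hL, Matrix.one_mul]
  have hT (i j k d) : T i j k d = ∑ e, U (i, j) e * V e (k, d) :=
    (congrFun₂ hUV (i, j) (k, d)).symm
  have hT' (i j k d) : T i j k d = ∑ f, R (i, k) f * S f (j, d) :=
    (congrFun₂ hRS (i, k) (j, d)).symm
  have hV (e k d) : V e (k, d) = ∑ f, (∑ i, x i * R (i, k) f) * ∑ j, Y e j * S f (j, d) := by
    calc V e (k, d) = ∑ p : α × β, L e p * T p.1 p.2 k d := (congrFun₂ hLT e (k, d)).symm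
      _ = ∑ p : α × β, ∑ f, (x p.1 * R (p.1, k) f) * (Y e p.2 * S f (p.2, d)) := by
        simp only [hT', L, of_apply, Finset.mul_sum, mul_mul_mul_comm]
      _ = ∑ f, (∑ i, x i * R (i, k) f) * ∑ j, Y e j * S f (j, d) := by
        rw [Finset.sum_comm]
        simp only [Finset.sum_mul_sum, Fintype.sum_prod_type]
  have hrank := rank_le_card_of_forall_eq_sum (M := unfolding fun k j i d => T i j k d)
    (fun k f => ∑ i, x i * R (i, k) f)
    (fun f q => ∑ e, U (q.2.1, q.1) e * ∑ j, Y e j * S f (j, q.2.2)) fun k ⟨j, i, d⟩ => by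
      simp only [unfolding, of_apply]
      rw [hT]
      simp only [hV, Finset.mul_sum (s := Finset.univ (α := Fin _))]
      rw [Finset.sum_comm]
      simp only [Finset.mul_sum (s := Finset.univ (α := ι)), mul_left_comm]
  simpa only [Fintype.card_fin] using hrank

variable [Fintype γ] (T : α → β → γ → δ → K)

theorem rank_flattening_reverse :
    (flattening fun d k j i => T i j k d).rank = (flattening T).rank :=
  (rank_submatrix (flattening T)ᵀ (Equiv.prodComm δ γ) (Equiv.prodComm β α)).trans
    (rank_transpose _)

theorem rank_flattening_le_unfolding_mul_unfolding :
    (flattening T).rank ≤ (unfolding T).rank * (unfolding fun j i k d => T i j k d).rank := by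
  classical
  obtain ⟨U₁, V₁, hU₁, hUV₁⟩ := exists_linearIndependent_col_mul_eq (unfolding T)
  obtain ⟨U₂, V₂, -, hUV₂⟩ := exists_linearIndependent_col_mul_eq
    (unfolding fun j i k d => T i j k d)
  obtain ⟨L, hL⟩ := exists_mul_eq_one_of_linearIndependent_col hU₁
  have hT₁ (i j k d) : T i j k d = ∑ e, U₁ i e * V₁ e (j, k, d) :=
    (congrFun₂ hUV₁ i (j, k, d)).symm
  have hT₂ (i j k d) : T i j k d = ∑ f, U₂ j f * V₂ f (i, k, d) :=
    (congrFun₂ hUV₂ j (i, k, d)).symm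
  have hLT : L * unfolding T = V₁ := by
    calc L * unfolding T = L * (U₁ * V₁) := by rw [hUV₁]
      _ = V₁ := by rw [← Matrix.mul_assoc, hL, Matrix.one_mul]
  have hV₁ (e j k d) : V₁ e (j, k, d) = ∑ f, U₂ j f * ∑ i, L e i * V₂ f (i, k, d) := by
    calc V₁ e (j, k, d) = ∑ i, L e i * T i j k d := (congrFun₂ hLT e (j, k, d)).symm
      _ = ∑ f, U₂ j f * ∑ i, L e i * V₂ f (i, k, d) := by
        simp only [hT₂, Finset.mul_sum]
        rw [Finset.sum_comm]
        simp only [mul_left_comm]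
  have hrank := rank_le_card_of_forall_eq_sum (M := flattening T)
    (fun p (e : Fin _ × Fin _) => U₁ p.1 e.1 * U₂ p.2 e.2)
    (fun e q => ∑ i, L e.1 i * V₂ e.2 (i, q)) fun ⟨i, j⟩ ⟨k, d⟩ => by
      simp only [flattening, of_apply, hT₁, hV₁, Fintype.sum_prod_type, Finset.mul_sum, mul_assoc]
  simpa only [Fintype.card_prod, Fintype.card_fin] using hrank

variable {T}

theorem rank_flattening_le_of_forall_eq_mul {w : β → K} (hw : w ≠ 0) {t : α → γ → δ → K}
    (hT : ∀ i j k d, T i j k d = w j * t i k d) :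
    (flattening fun j k i d => T i j k d).rank ≤
      (flattening T).rank * (flattening fun i k j d => T i j k d).rank := by
  have hA : (unfolding fun i d k j => T i j k d).rank ≤ (flattening T).rank :=
    rank_unfolding_le_of_forall_eq_mul hw hT
  have hD : (unfolding fun d i k j => T i j k d).rank ≤
      (flattening fun i k j d => T i j k d).rank := by
    rw [← rank_flattening_reverse]
    exact rank_unfolding_le_of_forall_eq_mul (T := fun d j k i => T i j k d)
      (t := fun d k i => t i k d) hw fun d j k i => hT i j k d
  rw [← rank_flattening_reverse, mul_comm]
  exact (rank_flattening_le_unfolding_mul_unfolding _).trans (Nat.mul_le_mul hD hA)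

theorem rank_unfolding_le_or_rank_flattening_le (h : (flattening T).rank ≤ 2) :
    (unfolding fun k j i d => T i j k d).rank ≤ (flattening fun i k j d => T i j k d).rank ∨
      (flattening fun j k i d => T i j k d).rank ≤
        (flattening T).rank * (flattening fun i k j d => T i j k d).rank := by
  classical
  obtain ⟨U, V, hU, hUV⟩ := exists_linearIndependent_col_mul_eq (flattening T)
  let Φ : (α × β → K) ≃ₗ[K] (α → K) →ₗ[K] β → K :=
    LinearEquiv.curry K K α β ≪≫ₗ transposeLinearEquiv α β K K ≪≫ₗ toLin'
  have hΦ_apply (u x) : Φ u x = fun j => ∑ i, u (i, j) * x i := rfl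
  have hΦ : LinearIndependent K fun e => Φ (U.col e) := hU.map' Φ.toLinearMap Φ.ker
  obtain ⟨x, hx⟩ | ⟨w, hw, hrange⟩ :=
    exists_linearIndependent_apply_or_range_le_span_singleton h hΦ
  · exact .inl (rank_unfolding_le_of_linearIndependent_contraction hUV hx)
  · have hUw (i e) : ∃ a : K, ∀ j, U (i, j) e = a * w j := by
      obtain ⟨a, ha⟩ := Submodule.mem_span_singleton.mp (hrange e ⟨Pi.single i 1, rfl⟩)
      refine ⟨a, fun j => ?_⟩
      simpa [hΦ_apply, Pi.single_apply] using (congrFun ha j).symm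
    choose a ha using hUw
    refine .inr (rank_flattening_le_of_forall_eq_mul hw
      (t := fun i k d => ∑ e, a i e * V e (k, d)) fun i j k d => ?_)
    have hT : T i j k d = ∑ e, U (i, j) e * V e (k, d) := (congrFun₂ hUV (i, j) (k, d)).symm
    rw [hT, Finset.mul_sum]
    simp only [ha, mul_assoc, mul_left_comm]

theorem rank_flattening_le_mul (hAB : (flattening T).rank ≤ 2)
    (hAC : (flattening fun i k j d => T i j k d).rank ≤ 2) :
    (flattening fun j k i d => T i j k d).rank ≤
      (flattening T).rank * (flattening fun i k j d => T i j k d).rank := by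
  obtain hC | hBC := rank_unfolding_le_or_rank_flattening_le hAB
  · obtain hB | hCB := rank_unfolding_le_or_rank_flattening_le hAC
    · exact (rank_flattening_le_unfolding_mul_unfolding _).trans (Nat.mul_le_mul hB hC)
    · rwa [mul_comm, ← rank_flattening_swap_left]
  · exact hBC

end Tensor

section ReducedState

variable {a b c : ℕ} {ι : Type*} [Fintype ι] (v : ι → Fin a × Fin b × Fin c → ℂ)

theorem rank_rhoAB_sum_vecMulVec :
    (rhoAB (∑ d, vecMulVec (v d) (star (v d)))).rank =
      (flattening fun i j k d => v d (i, j, k)).rank := by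
  rw [← rank_self_mul_conjTranspose (flattening _)]
  congr 1
  ext p q
  simp [rhoAB, flattening, mul_apply, Fintype.sum_prod_type, vecMulVec_apply, Matrix.sum_apply]

theorem rank_rhoAC_sum_vecMulVec :
    (rhoAC (∑ d, vecMulVec (v d) (star (v d)))).rank =
      (flattening fun i k j d => v d (i, j, k)).rank := by
  rw [← rank_self_mul_conjTranspose (flattening _)]
  congr 1
  ext p q
  simp [rhoAC, flattening, mul_apply, Fintype.sum_prod_type, vecMulVec_apply, Matrix.sum_apply]

theorem rank_rhoBC_sum_vecMulVec :
    (rhoBC (∑ d, vecMulVec (v d) (star (v d)))).rank =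
      (flattening fun j k i d => v d (i, j, k)).rank := by
  rw [← rank_self_mul_conjTranspose (flattening _)]
  congr 1
  ext p q
  simp [rhoBC, flattening, mul_apply, Fintype.sum_prod_type, vecMulVec_apply, Matrix.sum_apply]

end ReducedState

theorem stmt5_general {a b c : ℕ}
    {ρ : Matrix (Fin a × Fin b × Fin c) (Fin a × Fin b × Fin c) ℂ} (hρ : ρ.PosSemidef)
    (hAB : (rhoAB ρ).rank ≤ 2) (hAC : (rhoAC ρ).rank ≤ 2) :
    (rhoBC ρ).rank ≤ (rhoAB ρ).rank * (rhoAC ρ).rank := by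
  obtain ⟨m, v, rfl⟩ := posSemidef_iff_eq_sum_vecMulVec.mp hρ
  rw [rank_rhoAB_sum_vecMulVec] at hAB ⊢
  rw [rank_rhoAC_sum_vecMulVec] at hAC ⊢
  rw [rank_rhoBC_sum_vecMulVec]
  exact rank_flattening_le_mul hAB hAC

theorem stmt5 (a b c : ℕ) (ρ : Matrix (Fin a × Fin b × Fin c) (Fin a × Fin b × Fin c) ℂ)
    (hρ : ρ.PosSemidef) (hAB : (rhoAB ρ).rank = 2) (hAC : (rhoAC ρ).rank = 2) :
    (rhoBC ρ).rank ≤ 4 := by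
  simpa [hAB, hAC] using stmt5_general hρ hAB.le hAC.le
end

section
/- Let ρ be a positive semidefinite Hermitian complex matrix indexed by (Fin a × Fin b × Fin c) × (Fin a × Fin b × Fin c), with bipartite reduced matrices ρ_AB, ρ_AC, ρ_BC obtained by partial trace. If rank(ρ_AB) ≤ 3 and max(b, c) ≥ rank(ρ_AB) · rank(ρ_AC), then rank(ρ_BC) ≤ max(b, c). -/
open Matrix
open scoped ComplexOrder

/-!
After purification the claim concerns a tensor `ψ ∈ A ⊗ B ⊗ C ⊗ D` over a field: the rank of its
flattening `BC | AD` is at most the product of the ranks of the flattenings `AB | CD` and `AC | BD`.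
Let `V ⊆ A ⊗ B` be the support of `ψ`, let `S ⊆ V ⊗ D` be spanned by the slices of `ψ` along `C`,
and let `P i : V → B` be the contraction with the `i`-th basis vector of `A`. The three ranks are
the dimension of the span in `Hom(S, B)` of the maps `s ↦ P i (s y)`, `dim V`, and
`dim (∑ i, (P i ⊗ 1) S)`.

Choose `V₁ ⊆ V` nonzero minimizing the slope `dim (∑ i, P i V₁) / dim V₁`, and put
`B₁ = ∑ i, P i V₁`. Slope bounds pass from `V` to `V ⊗ D` by filtering along a basis of `D`, so
`dim S * dim B₁ ≤ dim V₁ * dim (∑ i, (P i ⊗ 1) S)`. The left-hand side is `dim Hom(S, B₁)`, and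
modulo `Hom(S, B₁)` the span is the one attached to the induced maps `V ⧸ V₁ → B ⧸ B₁`, so that
induction on `dim V` concludes.
-/

open Module

theorem finrank_map_add_finrank_inf_ker {K E F : Type*} [DivisionRing K]
    [AddCommGroup E] [Module K E] [FiniteDimensional K E] [AddCommGroup F] [Module K F]
    (f : E →ₗ[K] F) (S : Submodule K E) :
    finrank K (S.map f) + finrank K ↥(S ⊓ LinearMap.ker f) = finrank K S := by
  rw [← LinearMap.finrank_range_add_finrank_ker (f.domRestrict S), LinearMap.range_domRestrict,
    LinearMap.ker_domRestrict, ← Submodule.finrank_map_subtype_eq S, Submodule.map_comap_subtype]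

theorem finrank_ker_compRight {K E F M : Type*} [Field K]
    [AddCommGroup E] [Module K E] [AddCommGroup F] [Module K F]
    [AddCommGroup M] [Module K M] [FiniteDimensional K M] (g : E →ₗ[K] F) :
    finrank K (LinearMap.ker (LinearMap.compRight K g : (M →ₗ[K] E) →ₗ[K] M →ₗ[K] F)) =
      finrank K M * finrank K (LinearMap.ker g) := by
  let incl : (M →ₗ[K] LinearMap.ker g) →ₗ[K] M →ₗ[K] E :=
    LinearMap.compRight K (LinearMap.ker g).subtype
  have incl_injective : Function.Injective incl := fun φ φ' h ↦
    LinearMap.ext fun x ↦ Subtype.ext (LinearMap.congr_fun h x)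
  have ker_eq_range : LinearMap.ker (LinearMap.compRight K g) = LinearMap.range incl := by
    ext φ
    refine ⟨fun hφ ↦ ⟨φ.codRestrict _ fun x ↦ LinearMap.congr_fun hφ x, rfl⟩, ?_⟩
    rintro ⟨φ', rfl⟩
    exact LinearMap.ext fun x ↦ (φ' x).2
  rw [ker_eq_range, LinearMap.finrank_range_of_inj incl_injective, finrank_linearMap]

section JointImage

variable {K ι D V B V' B' : Type*} [DivisionRing K]
  [AddCommGroup V] [Module K V] [AddCommGroup B] [Module K B]
  [AddCommGroup V'] [Module K V'] [AddCommGroup B'] [Module K B']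

/-- The joint image `∑ i, P i S` of a subspace `S` under a family of linear maps `P`; its dimension
is the numerator of the slope of `S`. -/
def jointImage (P : ι → V →ₗ[K] B) (S : Submodule K V) : Submodule K B :=
  ⨆ i, S.map (P i)

theorem map_le_jointImage (P : ι → V →ₗ[K] B) (S : Submodule K V) (i : ι) :
    S.map (P i) ≤ jointImage P S :=
  le_iSup (fun i ↦ S.map (P i)) i

theorem jointImage_map {P : ι → V →ₗ[K] B} {P' : ι → V' →ₗ[K] B'} {f : V →ₗ[K] V'}
    {g : B →ₗ[K] B'} (h : ∀ i, P' i ∘ₗ f = g ∘ₗ P i) (S : Submodule K V) :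
    jointImage P' (S.map f) = (jointImage P S).map g := by
  simp only [jointImage, Submodule.map_iSup, ← Submodule.map_comp, h]

theorem jointImage_inf_ker_le {P : ι → V →ₗ[K] B} {P' : ι → V' →ₗ[K] B'} {f : V →ₗ[K] V'}
    {g : B →ₗ[K] B'} (h : ∀ i, P' i ∘ₗ f = g ∘ₗ P i) (S : Submodule K V) :
    jointImage P (S ⊓ LinearMap.ker f) ≤ jointImage P S ⊓ LinearMap.ker g := by
  refine le_inf (iSup_mono fun i ↦ Submodule.map_mono inf_le_left) (iSup_le fun i ↦ ?_)
  rintro _ ⟨v, ⟨-, hv⟩, rfl⟩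
  rw [LinearMap.mem_ker, ← LinearMap.comp_apply, ← h, LinearMap.comp_apply,
    LinearMap.mem_ker.mp hv, map_zero]

variable [FiniteDimensional K B]

theorem finrank_jointImage_map_add_inf_ker_le {P : ι → V →ₗ[K] B} {P' : ι → V' →ₗ[K] B'}
    {f : V →ₗ[K] V'} {g : B →ₗ[K] B'} (h : ∀ i, P' i ∘ₗ f = g ∘ₗ P i) (S : Submodule K V) :
    finrank K (jointImage P' (S.map f)) + finrank K (jointImage P (S ⊓ LinearMap.ker f)) ≤
      finrank K (jointImage P S) := by
  rw [jointImage_map h, ← finrank_map_add_finrank_inf_ker g (jointImage P S)]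
  exact Nat.add_le_add_left (Submodule.finrank_mono (jointImage_inf_ker_le h S)) _

variable [FiniteDimensional K V]

theorem mul_finrank_le_mul_finrank_jointImage_compLeft [Finite D] (P : ι → V →ₗ[K] B) {m n : ℕ}
    (slope : ∀ W : Submodule K V, m * finrank K W ≤ n * finrank K (jointImage P W))
    (T : Submodule K (D → V)) :
    m * finrank K T ≤ n * finrank K (jointImage (fun i ↦ (P i).compLeft D) T) := by
  classical
  cases nonempty_fintype D
  suffices h : ∀ (s : Finset D) (T : Submodule K (D → V)), (∀ t ∈ T, ∀ y ∉ s, t y = 0) →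
      m * finrank K T ≤ n * finrank K (jointImage (fun i ↦ (P i).compLeft D) T) from
    h Finset.univ T fun _ _ y hy ↦ absurd (Finset.mem_univ y) hy
  intro s
  induction s using Finset.induction_on with
  | empty =>
    intro T hT
    have T_eq_bot : T = ⊥ :=
      (Submodule.eq_bot_iff T).mpr fun t ht ↦ funext fun y ↦ hT t ht y (Finset.notMem_empty y)
    rw [T_eq_bot, finrank_bot, mul_zero]
    exact Nat.zero_le _
  | insert x s _ ih =>
    intro T hT
    let ev : (D → V) →ₗ[K] V := LinearMap.proj x
    have ker_bound := ih (T ⊓ LinearMap.ker ev) fun t ht y hy ↦ by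
      rcases eq_or_ne y x with rfl | hyx
      · exact ht.2
      · exact hT t ht.1 y (by simp [hyx, hy])
    have superadd := finrank_jointImage_map_add_inf_ker_le (P := fun i ↦ (P i).compLeft D)
      (P' := P) (f := ev) (g := LinearMap.proj x) (fun _ ↦ rfl) T
    calc m * finrank K T
        = m * finrank K (T.map ev) + m * finrank K ↥(T ⊓ LinearMap.ker ev) := by
          rw [← mul_add, finrank_map_add_finrank_inf_ker]
      _ ≤ n * finrank K (jointImage P (T.map ev)) +
          n * finrank K (jointImage (fun i ↦ (P i).compLeft D) (T ⊓ LinearMap.ker ev)) :=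
          add_le_add (slope _) ker_bound
      _ ≤ n * finrank K (jointImage (fun i ↦ (P i).compLeft D) T) := by
          rw [← mul_add]
          gcongr

theorem exists_minimal_slope [Nontrivial V] (P : ι → V →ₗ[K] B) :
    ∃ V₁ : Submodule K V, 0 < finrank K V₁ ∧ ∀ W : Submodule K V,
      finrank K (jointImage P V₁) * finrank K W ≤ finrank K V₁ * finrank K (jointImage P W) := by
  let slope (W : Submodule K V) : ℚ := finrank K (jointImage P W) / finrank K W
  let nonzero : Set (Submodule K V) := {W | 0 < finrank K W}
  have finite_slopes : (slope '' nonzero).Finite := by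
    refine ((Set.finite_Iic (finrank K B)).image2 (fun k l : ℕ ↦ (k / l : ℚ))
      (Set.finite_Iic (finrank K V))).subset (Set.image_subset_iff.mpr fun W _ ↦ ?_)
    exact Set.mem_image2_of_mem (Submodule.finrank_le _) (Submodule.finrank_le _)
  have top_mem : ⊤ ∈ nonzero := by simpa [nonzero] using finrank_pos (R := K) (M := V)
  obtain ⟨V₁, hV₁, slope_min⟩ := finite_slopes.exists_minimalFor' slope nonzero ⟨⊤, top_mem⟩
  refine ⟨V₁, hV₁, fun W ↦ ?_⟩
  rcases Nat.eq_zero_or_pos (finrank K W) with hW | hW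
  · simp [hW]
  · have slope_le : slope V₁ ≤ slope W := (le_total _ _).elim id (slope_min hW)
    rw [div_le_div_iff₀ (Nat.cast_pos.mpr hV₁) (Nat.cast_pos.mpr hW)] at slope_le
    rw [mul_comm (finrank K V₁)]
    exact_mod_cast slope_le

end JointImage

section RestrictionSpan

variable {K κ E B E' B' : Type*} [Field K]
  [AddCommGroup E] [Module K E] [AddCommGroup B] [Module K B]
  [AddCommGroup E'] [Module K E'] [AddCommGroup B'] [Module K B']

/-- The span, inside the space of linear maps `S → B`, of the restrictions to `S` of a family of
linear maps. For the coordinate maps of a tensor its dimension is the rank of a flattening. -/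
def restrictionSpan (Q : κ → E →ₗ[K] B) (S : Submodule K E) : Submodule K (S →ₗ[K] B) :=
  Submodule.span K (Set.range fun k ↦ (Q k).domRestrict S)

theorem domRestrict_mem_restrictionSpan (Q : κ → E →ₗ[K] B) (S : Submodule K E) (k : κ) :
    (Q k).domRestrict S ∈ restrictionSpan Q S :=
  Submodule.subset_span ⟨k, rfl⟩

theorem map_compRight_restrictionSpan {Q : κ → E →ₗ[K] B} {Q' : κ → E' →ₗ[K] B'}
    {f : E →ₗ[K] E'} {g : B →ₗ[K] B'} (h : ∀ k, Q' k ∘ₗ f = g ∘ₗ Q k) (S : Submodule K E) :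
    (restrictionSpan Q S).map (LinearMap.compRight K g) =
      (restrictionSpan Q' (S.map f)).map (LinearMap.lcomp K B' (f.submoduleMap S)) := by
  simp only [restrictionSpan, Submodule.map_span, ← Set.range_comp]
  congr 2
  funext k
  exact LinearMap.ext fun s ↦ (LinearMap.congr_fun (h k) s).symm

theorem finrank_restrictionSpan_le [FiniteDimensional K E] [FiniteDimensional K B]
    [FiniteDimensional K B'] {Q : κ → E →ₗ[K] B} {Q' : κ → E' →ₗ[K] B'} {f : E →ₗ[K] E'}
    {g : B →ₗ[K] B'} (h : ∀ k, Q' k ∘ₗ f = g ∘ₗ Q k) (S : Submodule K E) :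
    finrank K (restrictionSpan Q S) ≤
      finrank K (restrictionSpan Q' (S.map f)) + finrank K S * finrank K (LinearMap.ker g) := by
  rw [← finrank_map_add_finrank_inf_ker (LinearMap.compRight K g) (restrictionSpan Q S),
    map_compRight_restrictionSpan h, ← finrank_ker_compRight g]
  exact add_le_add (Submodule.finrank_map_le _ _) (Submodule.finrank_mono inf_le_right)

end RestrictionSpan

theorem finrank_restrictionSpan_le_mul_finrank_jointImage {K ι D : Type*} {V B : Type*}
    [Field K] [Finite D] [AddCommGroup V] [Module K V] [FiniteDimensional K V]
    [AddCommGroup B] [Module K B] [FiniteDimensional K B]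
    (P : ι → V →ₗ[K] B) (S : Submodule K (D → V)) :
    finrank K (restrictionSpan (fun p : ι × D ↦ P p.1 ∘ₗ LinearMap.proj p.2) S) ≤
      finrank K V * finrank K (jointImage (fun i ↦ (P i).compLeft D) S) := by
  induction hn : finrank K V using Nat.strong_induction_on generalizing V B with
  | _ n ih =>
  subst hn
  rcases subsingleton_or_nontrivial V with _ | _
  · have S_trivial : Subsingleton S := S.injective_subtype.subsingleton
    simp [finrank_zero_of_subsingleton]
  obtain ⟨V₁, V₁_pos, V₁_min⟩ := exists_minimal_slope P
  let B₁ := jointImage P V₁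
  let P' (i : ι) : V ⧸ V₁ →ₗ[K] B ⧸ B₁ :=
    V₁.mapQ B₁ (P i) (Submodule.map_le_iff_le_comap.mp (map_le_jointImage P V₁ i))
  let S' := S.map (V₁.mkQ.compLeft D)
  have comm_compLeft (i : ι) : (P' i).compLeft D ∘ₗ V₁.mkQ.compLeft D =
      B₁.mkQ.compLeft D ∘ₗ (P i).compLeft D := rfl
  have comm_proj (p : ι × D) : (P' p.1 ∘ₗ LinearMap.proj p.2) ∘ₗ V₁.mkQ.compLeft D =
      B₁.mkQ ∘ₗ P p.1 ∘ₗ LinearMap.proj p.2 := rfl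
  have dim_V : finrank K (V ⧸ V₁) + finrank K V₁ = finrank K V :=
    V₁.finrank_quotient_add_finrank
  have slope_bound : finrank K B₁ * finrank K S ≤
      finrank K V₁ * finrank K (jointImage (fun i ↦ (P i).compLeft D) S) :=
    mul_finrank_le_mul_finrank_jointImage_compLeft P V₁_min S
  have quotient_bound : finrank K (jointImage (fun i ↦ (P' i).compLeft D) S') ≤
      finrank K (jointImage (fun i ↦ (P i).compLeft D) S) := by
    rw [jointImage_map comm_compLeft]
    exact Submodule.finrank_map_le _ _
  calc finrank K (restrictionSpan (fun p : ι × D ↦ P p.1 ∘ₗ LinearMap.proj p.2) S)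
      ≤ finrank K (restrictionSpan (fun p : ι × D ↦ P' p.1 ∘ₗ LinearMap.proj p.2) S') +
          finrank K S * finrank K (LinearMap.ker B₁.mkQ) :=
        finrank_restrictionSpan_le comm_proj S
    _ ≤ finrank K (V ⧸ V₁) * finrank K (jointImage (fun i ↦ (P i).compLeft D) S) +
          finrank K V₁ * finrank K (jointImage (fun i ↦ (P i).compLeft D) S) := by
        rw [Submodule.ker_mkQ, mul_comm (finrank K S)]
        refine add_le_add ?_ slope_bound
        exact (ih _ (by omega) P' S' rfl).trans (Nat.mul_le_mul_left _ quotient_bound)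
    _ = finrank K V * finrank K (jointImage (fun i ↦ (P i).compLeft D) S) := by
        rw [← add_mul, dim_V]

theorem rank_flattening_le_mul_s6 {K α β γ δ : Type*} [Field K] [Fintype α] [Fintype β] [Fintype γ]
    [Fintype δ] (ψ : α → β → γ → δ → K) :
    (of fun (p : β × γ) (q : α × δ) ↦ ψ q.1 p.1 p.2 q.2).rank ≤
      (of fun (p : α × β) (q : γ × δ) ↦ ψ p.1 p.2 q.1 q.2).rank *
        (of fun (p : α × γ) (q : β × δ) ↦ ψ p.1 q.1 p.2 q.2).rank := by
  let MAB : Matrix (α × β) (γ × δ) K := of fun p q ↦ ψ p.1 p.2 q.1 q.2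
  let MAC : Matrix (α × γ) (β × δ) K := of fun p q ↦ ψ p.1 q.1 p.2 q.2
  let MBC : Matrix (β × γ) (α × δ) K := of fun p q ↦ ψ q.1 p.1 p.2 q.2
  let V : Submodule K (α × β → K) := Submodule.span K (Set.range MAB.col)
  let slice (k : γ) (x : δ) : V := ⟨MAB.col (k, x), Submodule.subset_span ⟨(k, x), rfl⟩⟩
  let S : Submodule K (δ → V) := Submodule.span K (Set.range slice)
  let P (i : α) : V →ₗ[K] β → K := LinearMap.funLeft K K (Prod.mk i) ∘ₗ V.subtype
  have rank_MBC_le : MBC.rank ≤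
      finrank K (restrictionSpan (fun p : α × δ ↦ P p.1 ∘ₗ LinearMap.proj p.2) S) := by
    let atSlices : (S →ₗ[K] β → K) →ₗ[K] β × γ → K := LinearMap.pi fun p ↦
      LinearMap.proj p.1 ∘ₗ LinearMap.applyₗ (⟨slice p.2, Submodule.subset_span ⟨p.2, rfl⟩⟩ : S)
    rw [Matrix.rank_eq_finrank_span_cols]
    refine (Submodule.finrank_mono ?_).trans (Submodule.finrank_map_le atSlices _)
    rw [Submodule.span_le, Set.range_subset_iff]
    exact fun p ↦ ⟨_, domRestrict_mem_restrictionSpan _ S p, rfl⟩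
  have le_rank_MAC : finrank K (jointImage (fun i ↦ (P i).compLeft δ) S) ≤ MAC.rank := by
    let regroup : (β × δ → K) →ₗ[K] δ → β → K :=
      LinearMap.pi fun x ↦ LinearMap.pi fun j ↦ LinearMap.proj (j, x)
    rw [Matrix.rank_eq_finrank_span_row]
    refine (Submodule.finrank_mono (iSup_le fun i ↦ ?_)).trans
      (Submodule.finrank_map_le regroup _)
    rw [Submodule.map_span, Submodule.span_le, ← Set.range_comp, Set.range_subset_iff]
    exact fun k ↦ ⟨MAC.row (i, k), Submodule.subset_span ⟨(i, k), rfl⟩, rfl⟩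
  calc MBC.rank
      ≤ finrank K V * finrank K (jointImage (fun i ↦ (P i).compLeft δ) S) :=
        rank_MBC_le.trans (finrank_restrictionSpan_le_mul_finrank_jointImage P S)
    _ ≤ MAB.rank * MAC.rank := by
        rw [Matrix.rank_eq_finrank_span_cols MAB]
        gcongr

theorem stmt6_general {a b c : ℕ} {ρ : Matrix (Fin a × Fin b × Fin c) (Fin a × Fin b × Fin c) ℂ}
    (hρ : ρ.PosSemidef) : (rhoBC ρ).rank ≤ (rhoAB ρ).rank * (rhoAC ρ).rank := by
  obtain ⟨d, v, rfl⟩ := Matrix.posSemidef_iff_eq_sum_vecMulVec.mp hρ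
  let ψ (i : Fin a) (j : Fin b) (k : Fin c) (x : Fin d) : ℂ := v x (i, j, k)
  let MAB : Matrix (Fin a × Fin b) (Fin c × Fin d) ℂ := of fun p q ↦ ψ p.1 p.2 q.1 q.2
  let MAC : Matrix (Fin a × Fin c) (Fin b × Fin d) ℂ := of fun p q ↦ ψ p.1 q.1 p.2 q.2
  let MBC : Matrix (Fin b × Fin c) (Fin a × Fin d) ℂ := of fun p q ↦ ψ q.1 p.1 p.2 q.2
  have hAB : rhoAB (∑ x, vecMulVec (v x) (star (v x))) = MAB * MABᴴ := by
    ext p q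
    simp [rhoAB, MAB, ψ, mul_apply, Matrix.sum_apply, vecMulVec_apply, Fintype.sum_prod_type]
  have hAC : rhoAC (∑ x, vecMulVec (v x) (star (v x))) = MAC * MACᴴ := by
    ext p q
    simp [rhoAC, MAC, ψ, mul_apply, Matrix.sum_apply, vecMulVec_apply, Fintype.sum_prod_type]
  have hBC : rhoBC (∑ x, vecMulVec (v x) (star (v x))) = MBC * MBCᴴ := by
    ext p q
    simp [rhoBC, MBC, ψ, mul_apply, Matrix.sum_apply, vecMulVec_apply, Fintype.sum_prod_type]
  rw [hAB, hAC, hBC]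
  simp only [rank_self_mul_conjTranspose]
  exact rank_flattening_le_mul_s6 ψ

theorem stmt6 (a b c : ℕ) (ρ : Matrix (Fin a × Fin b × Fin c) (Fin a × Fin b × Fin c) ℂ)
    (hρ : ρ.PosSemidef) (hAB : (rhoAB ρ).rank ≤ 3)
    (hmax : (rhoAB ρ).rank * (rhoAC ρ).rank ≤ max b c) :
    (rhoBC ρ).rank ≤ max b c :=
  (stmt6_general hρ).trans hmax
end
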